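/- arXiv:2408.15094 — 8 statements merged into one kernel-verified Lean document; each statement's English description precedes it below -/
import Mathlib

section
/- Let q, q¹, …, qᵐ be probability measures on a measurable space X and b ∈ ℝᵐ. Assume the Slater condition: there exist a probability measure p̂ on X and ζ > 0 with KL(qⁱ‖p̂) ≤ bᵢ − ζ for all i = 1, …, m. Then strong duality holds: F* = D*, where F* = inf{KL(q‖p) : p a probability measure on X with KL(qⁱ‖p) ≤ bᵢ for all i} and D* = sup_{λ ∈ ℝ₊ᵐ} g(λ) with g(λ) = inf over probability measures p of L(p, λ), L(p, λ) = KL(q‖p) + Σᵢ λᵢ (KL(qⁱ‖p) − bᵢ). Moreover the supremum defining D* is attained at some λ* ∈ ℝ₊ᵐ. -/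
open MeasureTheory

/-- The Kullback–Leibler divergence `KL(μ‖ν)`, with values in `EReal`. -/
noncomputable def KL {X : Type*} [MeasurableSpace X] (μ ν : Measure X) : EReal :=
  open Classical in
  if μ ≪ ν ∧ Integrable (llr μ ν) μ then ((∫ x, llr μ ν x ∂μ : ℝ) : EReal) else ⊤

/-- The Lagrangian `L(p, λ) = KL(q‖p) + ∑ i, λ i * (KL(qⁱ‖p) − b i)` of the KL-constrained
problem. -/
noncomputable def Lagrangian {X : Type*} [MeasurableSpace X] {m : ℕ}
    (q : Measure X) (qi : Fin m → Measure X) (b : Fin m → ℝ)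
    (p : Measure X) (l : Fin m → ℝ) : EReal :=
  KL q p + ∑ i, (l i : EReal) * (KL (qi i) p - (b i : EReal))

/-- The dual function `g(λ) = inf over probability measures p of L(p, λ)`. -/
noncomputable def dualFn {X : Type*} [MeasurableSpace X] {m : ℕ}
    (q : Measure X) (qi : Fin m → Measure X) (b : Fin m → ℝ) (l : Fin m → ℝ) : EReal :=
  ⨅ p : {p : Measure X // IsProbabilityMeasure p}, Lagrangian q qi b p.1 l

/-!
The divergence `KL(μ‖p)` is convex in `p`, so the points of `ℝᵐ × ℝ` lying above some
`(KL(q¹‖p), …, KL(qᵐ‖p), KL(q‖p))` form a convex set, taken over the `p` for which all these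
divergences are finite. Hahn–Banach separates it from the points strictly below `(b, F*)`; the
coefficients of the separating functional are nonnegative, and the Slater point rules out that
the last one vanishes, so dividing by it gives the multiplier `λ*`.

The Slater point `p̂` need not satisfy `KL(q‖p̂) < ∞`, so it is first replaced by
`e^{-ε} p̂ + (1 - e^{-ε}) q`: since `KL(μ‖a ν + c ρ) ≤ KL(μ‖ν) - log a`, this costs at most `ε` in
each constraint. The same bound makes every `KL(qⁱ‖·)` finite on the open segment from any `p` to
the new Slater point, so the Lagrangian inequality reaches an arbitrary `p` by convexity, letting
a point of that segment tend to `p`.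
-/

open Set InformationTheory
open scoped ENNReal NNReal Topology

section Convex

theorem map_nonneg_of_bddAbove_image_Iic {V : Type*} [AddCommGroup V] [PartialOrder V]
    [IsOrderedAddMonoid V] [Module ℝ V] [PosSMulMono ℝ V] {φ : V →ₗ[ℝ] ℝ} {a : V}
    (h : BddAbove (φ '' Iic a)) {v : V} (hv : 0 ≤ v) : 0 ≤ φ v := by
  obtain ⟨u, hu⟩ := h
  by_contra! hneg
  have hray (k : ℕ) : φ a + k * -φ v ≤ u := by
    have hmem : a - (k : ℝ) • v ∈ Iic a := sub_le_self a (smul_nonneg k.cast_nonneg hv)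
    simpa [sub_eq_add_neg] using hu (mem_image_of_mem φ hmem)
  obtain ⟨k, hk⟩ := exists_nat_gt ((u - φ a) / -φ v)
  rw [div_lt_iff₀ (neg_pos.2 hneg)] at hk
  linarith [hray k]

theorem exists_nonneg_separating_Iic {V : Type*} [AddCommGroup V] [PartialOrder V]
    [IsOrderedAddMonoid V] [Module ℝ V] [PosSMulMono ℝ V] [TopologicalSpace V]
    [IsTopologicalAddGroup V] [ContinuousSMul ℝ V] {a : V} {T : Set V} (hT : Convex ℝ T)
    (ha : (interior (Iic a)).Nonempty)
    (hdisj : Disjoint (interior (Iic a)) T) :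
    ∃ φ : StrongDual ℝ V, (∀ v, 0 ≤ v → 0 ≤ φ v) ∧ (∀ t ∈ T, φ a ≤ φ t) ∧
      ∀ w ∈ interior (Iic a), ∀ t ∈ T, φ w < φ t := by
  have hconv : Convex ℝ (Iic a) := convex_Iic a
  obtain ⟨φ, u, hφa, hφT⟩ :=
    geometric_hahn_banach_open hconv.interior isOpen_interior hT hdisj
  have hle : ∀ w ∈ Iic a, φ w ≤ u := by
    have hsub : closure (interior (Iic a)) ⊆ {w | φ w ≤ u} :=
      closure_minimal (fun w hw ↦ (hφa w hw).le) (isClosed_le φ.continuous continuous_const)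
    rw [hconv.closure_interior_eq_closure_of_nonempty_interior ha] at hsub
    exact subset_closure.trans hsub
  refine ⟨φ, fun v hv ↦ ?_, fun t ht ↦ (hle a self_mem_Iic).trans (hφT t ht),
    fun w hw t ht ↦ (hφa w hw).trans_le (hφT t ht)⟩
  exact map_nonneg_of_bddAbove_image_Iic (φ := φ.toLinearMap) ⟨u, forall_mem_image.2 hle⟩ hv

variable {E : Type*} [AddCommMonoid E] [SMul ℝ≥0 E] {s : Set E}

theorem convex_upperClosure_image {V : Type*} [AddCommGroup V] [PartialOrder V]
    [IsOrderedAddMonoid V] [Module ℝ V] [PosSMulMono ℝ V] {h : E → V}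
    (hh : ConvexOn ℝ≥0 s h) : Convex ℝ (upperClosure (h '' s) : Set V) := by
  rintro v ⟨_, ⟨x, hx, rfl⟩, hxv⟩ w ⟨_, ⟨y, hy, rfl⟩, hyw⟩ a c ha hc hac
  lift a to ℝ≥0 using ha
  lift c to ℝ≥0 using hc
  have hac' : a + c = 1 := mod_cast hac
  refine ⟨_, mem_image_of_mem h (hh.1 hx hy zero_le zero_le hac'), ?_⟩
  calc h (a • x + c • y) ≤ (a : ℝ) • h x + (c : ℝ) • h y := hh.2 hx hy zero_le zero_le hac'
    _ ≤ (a : ℝ) • v + (c : ℝ) • w := by gcongr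

variable {ι : Type*}

theorem interior_Iic_pi_prod [Finite ι] (b : ι → ℝ) (r : ℝ) :
    interior (Iic (b, r)) = {z : (ι → ℝ) × ℝ | (∀ i, z.1 i < b i) ∧ z.2 < r} := by
  rw [← Iic_prod_Iic, interior_prod_eq, ← pi_univ_Iic, interior_pi_set finite_univ]
  ext z
  simp

variable [Fintype ι]

theorem exists_nnreal_coeff_of_nonneg {φ : ((ι → ℝ) × ℝ) →ₗ[ℝ] ℝ} (hφ : ∀ v, 0 ≤ v → 0 ≤ φ v) :
    ∃ (l : ι → ℝ≥0) (c : ℝ≥0), ∀ u r, φ (u, r) = ∑ i, l i * u i + c * r := by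
  classical
  refine ⟨fun i ↦ ⟨φ (Pi.single i 1, 0), hφ _ ⟨Pi.single_nonneg.2 zero_le_one, le_rfl⟩⟩,
    ⟨φ (0, 1), hφ _ ⟨le_rfl, zero_le_one⟩⟩, fun u r ↦ ?_⟩
  have hdecomp : (u, r) = ∑ i, u i • ((Pi.single i 1 : ι → ℝ), (0 : ℝ)) + r • (0, 1) := by
    ext <;> simp [Prod.fst_sum, Prod.snd_sum, Pi.single_apply]
  rw [hdecomp, map_add]
  simp only [map_sum, map_smul, smul_eq_mul, mul_comm]
  rfl

theorem exists_lagrange_multiplier {f : E → ℝ} {g : ι → E → ℝ} {b : ι → ℝ} {x₀ : E} {F : ℝ}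
    (hf : ConvexOn ℝ≥0 s f) (hg : ∀ i, ConvexOn ℝ≥0 s (g i)) (hx₀ : x₀ ∈ s)
    (hgx₀ : ∀ i, g i x₀ < b i) (hF : ∀ x ∈ s, (∀ i, g i x ≤ b i) → F ≤ f x) :
    ∃ l : ι → ℝ≥0, ∀ x ∈ s, F + ∑ i, l i * b i ≤ f x + ∑ i, l i * g i x := by
  let h : E → (ι → ℝ) × ℝ := fun x ↦ (fun i ↦ g i x, f x)
  have hh : ConvexOn ℝ≥0 s h := ⟨hf.1, fun x hx y hy a c ha hc hac ↦
    ⟨fun i ↦ (hg i).2 hx hy ha hc hac, hf.2 hx hy ha hc hac⟩⟩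
  have hmem {x : E} (hx : x ∈ s) : h x ∈ upperClosure (h '' s) :=
    subset_upperClosure (mem_image_of_mem h hx)
  have hint : ((fun i ↦ g i x₀), F - 1) ∈ interior (Iic (b, F)) := by
    rw [interior_Iic_pi_prod]
    exact ⟨hgx₀, sub_one_lt F⟩
  have hdisj : Disjoint (interior (Iic (b, F))) (upperClosure (h '' s) : Set _) := by
    rw [interior_Iic_pi_prod, disjoint_left]
    rintro z ⟨hzb, hzF⟩ ⟨_, ⟨x, hx, rfl⟩, hxz⟩
    exact ((hF x hx fun i ↦ (hxz.1 i).trans (hzb i).le).trans hxz.2).not_gt hzF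
  obtain ⟨φ, hφ_nonneg, hφ_le, hφ_lt⟩ :=
    exists_nonneg_separating_Iic (convex_upperClosure_image hh) ⟨_, hint⟩ hdisj
  obtain ⟨l, c, hφ⟩ := exists_nnreal_coeff_of_nonneg (φ := φ.toLinearMap) hφ_nonneg
  simp only [ContinuousLinearMap.coe_coe] at hφ
  have hc : 0 < (c : ℝ) := by
    have hlt := hφ_lt _ hint _ (hmem hx₀)
    simp only [h, hφ, add_lt_add_iff_left] at hlt
    have hle := hF x₀ hx₀ fun i ↦ (hgx₀ i).le
    nlinarith [c.coe_nonneg]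
  refine ⟨fun i ↦ l i / c, fun x hx ↦ le_of_mul_le_mul_left ?_ hc⟩
  have hle := hφ_le _ (hmem hx)
  simp only [h, hφ] at hle
  simp only [NNReal.coe_div, div_mul_eq_mul_div, ← Finset.sum_div, mul_add,
    mul_div_cancel₀ _ hc.ne']
  linarith

theorem convex_ne_top {f : E → ℝ≥0∞} (hf : ConvexOn ℝ≥0 s f) : Convex ℝ≥0 {x ∈ s | f x ≠ ∞} := by
  refine fun x hx y hy a c ha hc hac ↦ ⟨hf.1 hx.1 hy.1 ha hc hac, ?_⟩
  refine ne_top_of_le_ne_top ?_ (hf.2 hx.1 hy.1 ha hc hac)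
  have hfx := hx.2
  have hfy := hy.2
  simp only [ENNReal.smul_def, smul_eq_mul]
  finiteness

theorem convexOn_toReal {f : E → ℝ≥0∞} (hf : ConvexOn ℝ≥0 s f) (hfin : ∀ x ∈ s, f x ≠ ∞) :
    ConvexOn ℝ≥0 s fun x ↦ (f x).toReal := by
  refine ⟨hf.1, fun x hx y hy a c ha hc hac ↦ ?_⟩
  have hfx := hfin x hx
  have hfy := hfin y hy
  have hle := hf.2 hx hy ha hc hac
  simp only [ENNReal.smul_def, smul_eq_mul] at hle
  have hle' := ENNReal.toReal_mono (by finiteness) hle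
  rwa [ENNReal.toReal_add (by finiteness) (by finiteness), ENNReal.toReal_mul,
    ENNReal.toReal_mul] at hle'

theorem le_of_forall_mem_openSegment_le {f : E → ℝ≥0∞} {C : ℝ≥0∞} {x x₀ : E}
    (hf : ConvexOn ℝ≥0 s f) (hx : x ∈ s) (hx₀ : x₀ ∈ s) (hfx₀ : f x₀ ≠ ∞)
    (h : ∀ y ∈ openSegment ℝ≥0 x x₀, C ≤ f y) : C ≤ f x := by
  have hlim : Filter.Tendsto (fun c : ℝ≥0 ↦ f x + c * f x₀) (𝓝[>] 0) (𝓝 (f x)) := by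
    have hcont : Continuous fun c : ℝ≥0 ↦ f x + c * f x₀ :=
      continuous_const.add ((ENNReal.continuous_mul_const hfx₀).comp ENNReal.continuous_coe)
    simpa using (hcont.tendsto 0).mono_left nhdsWithin_le_nhds
  refine ge_of_tendsto hlim ?_
  filter_upwards [Ioo_mem_nhdsGT one_pos] with c hc
  have hsum : 1 - c + c = 1 := tsub_add_cancel_of_le hc.2.le
  calc C ≤ f ((1 - c) • x + c • x₀) := h _ ⟨_, _, tsub_pos_of_lt hc.2, hc.1, hsum, rfl⟩
    _ ≤ (1 - c) • f x + c • f x₀ := hf.2 hx hx₀ zero_le zero_le hsum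
    _ ≤ f x + c * f x₀ := add_le_add_left (mul_le_of_le_one_left' (by simp)) _

theorem convexOn_add_sum_mul {f : E → ℝ≥0∞} {g : ι → E → ℝ≥0∞} (hf : ConvexOn ℝ≥0 s f)
    (hg : ∀ i, ConvexOn ℝ≥0 s (g i)) (l : ι → ℝ≥0) :
    ConvexOn ℝ≥0 s fun x ↦ f x + ∑ i, l i * g i x := by
  have hsum : ConvexOn ℝ≥0 s (∑ i, l i • g i) :=
    Finset.sum_induction _ (ConvexOn ℝ≥0 s) (fun _ _ ↦ ConvexOn.add) (convexOn_const 0 hf.1)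
      fun i _ ↦ (hg i).smul zero_le
  convert! hf.add hsum using 2 with x
  simp [ENNReal.smul_def]

theorem exists_lagrange_multiplier_of_ne_top {f : E → ℝ≥0∞} {g : ι → E → ℝ≥0∞} {b : ι → ℝ≥0}
    {x₀ : E} {F : ℝ≥0} (hf : ConvexOn ℝ≥0 s f) (hg : ∀ i, ConvexOn ℝ≥0 s (g i))
    (hf_top : ∀ x ∈ s, f x ≠ ∞) (hg_top : ∀ i, ∀ x ∈ s, g i x ≠ ∞) (hx₀ : x₀ ∈ s)
    (hgx₀ : ∀ i, g i x₀ < b i) (hF : ∀ x ∈ s, (∀ i, g i x ≤ b i) → F ≤ f x) :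
    ∃ l : ι → ℝ≥0, ∀ x ∈ s, F + ∑ i, (l i : ℝ≥0∞) * b i ≤ f x + ∑ i, l i * g i x := by
  have hF' : ∀ x ∈ s, (∀ i, (g i x).toReal ≤ b i) → F ≤ (f x).toReal := fun x hx hgx ↦
    ENNReal.toReal_mono (hf_top x hx) <| hF x hx fun i ↦
      (ENNReal.toReal_le_toReal (hg_top i x hx) ENNReal.coe_ne_top).1 (hgx i)
  obtain ⟨l, hl⟩ := exists_lagrange_multiplier (convexOn_toReal hf hf_top)
    (fun i ↦ convexOn_toReal (hg i) (hg_top i)) hx₀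
    (fun i ↦ ENNReal.toReal_strict_mono ENNReal.coe_ne_top (hgx₀ i)) hF'
  refine ⟨l, fun x hx ↦ ?_⟩
  have hfx := hf_top x hx
  have hb_mul : ∀ i ∈ Finset.univ, (l i : ℝ≥0∞) * b i ≠ ∞ := fun i _ ↦ by finiteness
  have hg_mul : ∀ i ∈ Finset.univ, l i * g i x ≠ ∞ := fun i _ ↦
    ENNReal.mul_ne_top ENNReal.coe_ne_top (hg_top i x hx)
  have hb_sum := ENNReal.sum_ne_top.2 hb_mul
  have hg_sum := ENNReal.sum_ne_top.2 hg_mul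
  rw [← ENNReal.toReal_le_toReal (by finiteness) (by finiteness),
    ENNReal.toReal_add (by finiteness) hb_sum, ENNReal.toReal_add hfx hg_sum,
    ENNReal.toReal_sum hb_mul, ENNReal.toReal_sum hg_mul]
  simpa using hl x hx

theorem exists_lagrange_multiplier_of_openSegment_ne_top {f : E → ℝ≥0∞} {g : ι → E → ℝ≥0∞}
    {b : ι → ℝ≥0} {x₀ : E} {F : ℝ≥0} (hf : ConvexOn ℝ≥0 s f) (hg : ∀ i, ConvexOn ℝ≥0 s (g i))
    (hx₀ : x₀ ∈ s) (hfx₀ : f x₀ ≠ ∞) (hgx₀ : ∀ i, g i x₀ < b i)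
    (hg_top : ∀ i, ∀ x ∈ s, ∀ y ∈ openSegment ℝ≥0 x x₀, g i y ≠ ∞)
    (hF : ∀ x ∈ s, (∀ i, g i x ≤ b i) → F ≤ f x) :
    ∃ l : ι → ℝ≥0, ∀ x ∈ s, F + ∑ i, (l i : ℝ≥0∞) * b i ≤ f x + ∑ i, l i * g i x := by
  let D : Set E := {x ∈ s | f x ≠ ∞} ∩ ⋂ i, {x ∈ s | g i x ≠ ∞}
  have hDs : D ⊆ s := fun x hx ↦ hx.1.1
  have hD : Convex ℝ≥0 D := (convex_ne_top hf).inter (convex_iInter fun i ↦ convex_ne_top (hg i))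
  have hgx₀_top : ∀ i, g i x₀ ≠ ∞ := fun i ↦ (hgx₀ i).ne_top
  obtain ⟨l, hl⟩ := exists_lagrange_multiplier_of_ne_top (hf.subset hDs hD)
    (fun i ↦ (hg i).subset hDs hD) (fun x hx ↦ hx.1.2) (fun i x hx ↦ (mem_iInter.1 hx.2 i).2)
    ⟨⟨hx₀, hfx₀⟩, mem_iInter.2 fun i ↦ ⟨hx₀, hgx₀_top i⟩⟩ hgx₀ fun x hx ↦ hF x (hDs hx)
  refine ⟨l, fun x hx ↦ ?_⟩
  by_cases hfx : f x = ∞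
  · simp [hfx]
  have hsum₀ : ∑ i, l i * g i x₀ ≠ ∞ :=
    ENNReal.sum_ne_top.2 fun i _ ↦ ENNReal.mul_ne_top ENNReal.coe_ne_top (hgx₀_top i)
  -- `g i x = ∞` does not make the right-hand side infinite when `l i = 0`, since `0 * ∞ = 0`.
  refine le_of_forall_mem_openSegment_le (f := fun x ↦ f x + ∑ i, l i * g i x)
    (convexOn_add_sum_mul hf hg l) hx hx₀ (ENNReal.add_ne_top.2 ⟨hfx₀, hsum₀⟩)
    fun y hy ↦ hl y ⟨?_, mem_iInter.2 fun i ↦ ⟨?_, hg_top i x hx y hy⟩⟩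
  · exact (convex_ne_top hf).openSegment_subset ⟨hx, hfx⟩ ⟨hx₀, hfx₀⟩ hy
  · exact hf.1.openSegment_subset hx hx₀ hy

end Convex

section KL

variable {X : Type*} [MeasurableSpace X] {μ ν ρ : Measure X}

theorem absolutelyContinuous_smul_add {a : ℝ≥0} (ha : a ≠ 0) (h : μ ≪ ν) :
    μ ≪ a • ν + ρ := by
  have hsmul : μ ≪ a • ν := h.smul_right (ENNReal.coe_ne_zero.2 ha)
  exact hsmul.add_right ρ

section SigmaFinite

variable [SigmaFinite μ] [SigmaFinite ν] [SigmaFinite ρ]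

theorem llr_ae_eq_neg_log (h : μ ≪ ν) :
    llr μ ν =ᵐ[μ] fun x ↦ -Real.log (ν.rnDeriv μ x).toReal := by
  filter_upwards [neg_llr h] with x hx
  rw [← neg_eq_iff_eq_neg]
  exact hx

theorem toReal_rnDeriv_pos (h : μ ≪ ν) : ∀ᵐ x ∂μ, 0 < (ν.rnDeriv μ x).toReal := by
  filter_upwards [Measure.rnDeriv_pos' h, ν.rnDeriv_lt_top μ] with x hpos hlt
  exact ENNReal.toReal_pos hpos.ne' hlt.ne

theorem toReal_rnDeriv_add : ∀ᵐ x ∂μ, ((ν + ρ).rnDeriv μ x).toReal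
    = (ν.rnDeriv μ x).toReal + (ρ.rnDeriv μ x).toReal := by
  filter_upwards [ν.rnDeriv_add' ρ μ, ν.rnDeriv_lt_top μ, ρ.rnDeriv_lt_top μ] with x hadd hν hρ
  rw [hadd, Pi.add_apply, ENNReal.toReal_add hν.ne hρ.ne]

theorem toReal_rnDeriv_smul (a : ℝ≥0) :
    ∀ᵐ x ∂μ, ((a • ν).rnDeriv μ x).toReal = a * (ν.rnDeriv μ x).toReal := by
  filter_upwards [ν.rnDeriv_smul_left' μ a] with x hx
  rw [hx, Pi.smul_apply, ENNReal.toReal_smul, NNReal.smul_def, smul_eq_mul]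

theorem llr_add_right_ae_le (h : μ ≪ ν) : llr μ (ν + ρ) ≤ᵐ[μ] llr μ ν := by
  filter_upwards [llr_ae_eq_neg_log h, llr_ae_eq_neg_log (h.add_right ρ), toReal_rnDeriv_pos h,
    toReal_rnDeriv_add (μ := μ) (ν := ν) (ρ := ρ)] with x hν hνρ hpos hadd
  rw [hν, hνρ, hadd, neg_le_neg_iff]
  exact Real.log_le_log hpos (le_add_of_nonneg_right ENNReal.toReal_nonneg)

theorem llr_smul_add_smul_ae_le {a c : ℝ≥0} (ha : a ≠ 0) (hac : a + c = 1) (hν : μ ≪ ν)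
    (hρ : μ ≪ ρ) : llr μ (a • ν + c • ρ) ≤ᵐ[μ] fun x ↦ a * llr μ ν x + c * llr μ ρ x := by
  have hmix : μ ≪ a • ν + c • ρ := absolutelyContinuous_smul_add ha hν
  filter_upwards [llr_ae_eq_neg_log hν, llr_ae_eq_neg_log hρ, llr_ae_eq_neg_log hmix,
    toReal_rnDeriv_pos hν, toReal_rnDeriv_pos hρ,
    toReal_rnDeriv_add (μ := μ) (ν := a • ν) (ρ := c • ρ),
    toReal_rnDeriv_smul (μ := μ) (ν := ν) a, toReal_rnDeriv_smul (μ := μ) (ν := ρ) c]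
    with x hxν hxρ hxmix hνpos hρpos hadd hsmulν hsmulρ
  have hconcave := strictConcaveOn_log_Ioi.concaveOn.2 hνpos hρpos a.coe_nonneg c.coe_nonneg
    (mod_cast hac)
  simp only [smul_eq_mul] at hconcave
  rw [hxν, hxρ, hxmix, hadd, hsmulν, hsmulρ]
  linarith

end SigmaFinite

section IsFiniteMeasure

variable [IsFiniteMeasure μ] [IsFiniteMeasure ν] [IsFiniteMeasure ρ]

theorem integrable_llr_of_ae_le (h : μ ≪ ν) {g : X → ℝ} (hg : Integrable g μ)
    (hle : llr μ ν ≤ᵐ[μ] g) : Integrable (llr μ ν) μ := by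
  refine integrable_of_le_of_le (measurable_llr μ ν).aestronglyMeasurable ?_ hle
    (Measure.integrable_toReal_rnDeriv (μ := ν) (ν := μ)).neg hg
  filter_upwards [llr_ae_eq_neg_log h] with x hx
  rw [hx, Pi.neg_apply, neg_le_neg_iff]
  exact Real.log_le_self ENNReal.toReal_nonneg

theorem klDiv_le_of_llr_ae_le (h : μ ≪ ν) {g : X → ℝ} (hg : Integrable g μ)
    (hle : llr μ ν ≤ᵐ[μ] g) :
    klDiv μ ν ≤ ENNReal.ofReal (∫ x, g x ∂μ + ν.real univ - μ.real univ) := by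
  have hint := integrable_llr_of_ae_le h hg hle
  have hle_int : ∫ x, llr μ ν x ∂μ ≤ ∫ x, g x ∂μ := integral_mono_ae hint hg hle
  rw [klDiv_of_ac_of_integrable h hint]
  gcongr

variable (μ ν ρ) in
theorem klDiv_smul_add_smul_right_le {a c : ℝ≥0} (hac : a + c = 1) :
    klDiv μ (a • ν + c • ρ) ≤ a * klDiv μ ν + c * klDiv μ ρ := by
  rcases eq_or_ne a 0 with rfl | ha
  · simp [show c = 1 by simpa using hac]
  rcases eq_or_ne c 0 with rfl | hc
  · simp [show a = 1 by simpa using hac]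
  by_cases hfin : klDiv μ ν = ∞ ∨ klDiv μ ρ = ∞
  · rcases hfin with hfin | hfin <;> simp [hfin, ha, hc]
  rw [not_or] at hfin
  obtain ⟨hν, hintν⟩ := klDiv_ne_top_iff.1 hfin.1
  obtain ⟨hρ, hintρ⟩ := klDiv_ne_top_iff.1 hfin.2
  have hle := klDiv_le_of_llr_ae_le (absolutelyContinuous_smul_add ha hν)
    ((hintν.const_mul a).add (hintρ.const_mul c)) (llr_smul_add_smul_ae_le ha hac hν hρ)
  refine hle.trans_eq ?_
  have hac' : (a : ℝ) + c = 1 := mod_cast hac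
  have hmul (t : ℝ≥0) (u : ℝ) : ENNReal.ofReal (t * u) = t * ENNReal.ofReal u := by
    rw [ENNReal.ofReal_mul t.coe_nonneg, ENNReal.ofReal_coe_nnreal]
  rw [klDiv_of_ac_of_integrable hν hintν, klDiv_of_ac_of_integrable hρ hintρ, ← hmul, ← hmul,
    ← ENNReal.ofReal_add
      (mul_nonneg a.coe_nonneg (integral_llr_add_sub_measure_univ_nonneg hν hintν))
      (mul_nonneg c.coe_nonneg (integral_llr_add_sub_measure_univ_nonneg hρ hintρ)),
    integral_add' (hintν.const_mul a) (hintρ.const_mul c), integral_const_mul, integral_const_mul,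
    measureReal_add_apply, measureReal_nnreal_smul_apply, measureReal_nnreal_smul_apply]
  congr 1
  linear_combination μ.real univ * hac'

variable (μ) in
theorem convexOn_klDiv_right : ConvexOn ℝ≥0 {ν : Measure X | IsFiniteMeasure ν} (klDiv μ) :=
  ⟨fun ν (_ : IsFiniteMeasure ν) ρ (_ : IsFiniteMeasure ρ) a c _ _ _ ↦
    (inferInstance : IsFiniteMeasure (a • ν + c • ρ)),
    fun ν (_ : IsFiniteMeasure ν) ρ (_ : IsFiniteMeasure ρ) _ _ _ _ hac ↦
      klDiv_smul_add_smul_right_le μ ν ρ hac⟩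

end IsFiniteMeasure

section IsProbabilityMeasure

theorem convex_isProbabilityMeasure :
    Convex ℝ≥0 {p : Measure X | IsProbabilityMeasure p} := by
  refine fun p (hp : IsProbabilityMeasure p) r (hr : IsProbabilityMeasure r) a c _ _ hac ↦ ⟨?_⟩
  rw [Measure.add_apply, Measure.smul_apply, Measure.smul_apply, measure_univ, measure_univ,
    ← add_smul, hac, one_smul]

variable [IsProbabilityMeasure μ] [IsProbabilityMeasure ν] [IsProbabilityMeasure ρ]

theorem klDiv_smul_add_smul_right_le_add_ofReal {a c : ℝ≥0} (ha : a ≠ 0)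
    (hac : a + c = 1) :
    klDiv μ (a • ν + c • ρ) ≤ klDiv μ ν + ENNReal.ofReal (-Real.log a) := by
  by_cases hfin : klDiv μ ν = ∞
  · simp [hfin]
  obtain ⟨hν, hint⟩ := klDiv_ne_top_iff.1 hfin
  have hac' : (a : ℝ) + c = 1 := mod_cast hac
  have hsmul : μ ≪ a • ν := hν.smul_right (ENNReal.coe_ne_zero.2 ha)
  have hle : llr μ (a • ν + c • ρ) ≤ᵐ[μ] fun x ↦ llr μ ν x + -Real.log a := by
    filter_upwards [llr_add_right_ae_le (ρ := c • ρ) hsmul, llr_smul_nnreal_right hν a ha]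
      with x hadd hx
    rw [← sub_eq_add_neg]
    exact hadd.trans_eq hx
  have hmass : (a • ν + c • ρ).real univ = 1 := by
    simp [measureReal_add_apply, measureReal_nnreal_smul_apply, hac']
  calc klDiv μ (a • ν + c • ρ)
      ≤ ENNReal.ofReal (∫ x, llr μ ν x + -Real.log a ∂μ + (a • ν + c • ρ).real univ
          - μ.real univ) :=
        klDiv_le_of_llr_ae_le (hsmul.add_right _) (hint.add (integrable_const _)) hle
    _ = ENNReal.ofReal (∫ x, llr μ ν x ∂μ + ν.real univ - μ.real univ + -Real.log a) := by
        rw [integral_add hint (integrable_const _), hmass, integral_const, probReal_univ,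
          probReal_univ, one_smul]
        ring_nf
    _ ≤ klDiv μ ν + ENNReal.ofReal (-Real.log a) := by
        rw [klDiv_of_ac_of_integrable hν hint]
        exact ENNReal.ofReal_add_le

theorem klDiv_ne_top_of_mem_openSegment (hfin : klDiv μ ρ ≠ ∞) {r : Measure X}
    (hr : r ∈ openSegment ℝ≥0 ν ρ) : klDiv μ r ≠ ∞ := by
  obtain ⟨a, c, -, hc, hac, rfl⟩ := hr
  rw [add_comm] at hac ⊢
  exact ne_top_of_le_ne_top (ENNReal.add_ne_top.2 ⟨hfin, ENNReal.ofReal_ne_top⟩)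
    (klDiv_smul_add_smul_right_le_add_ofReal hc.ne' hac)

theorem exists_klDiv_ne_top_forall_klDiv_le (q p : Measure X) [IsProbabilityMeasure q]
    [IsProbabilityMeasure p] {ε : ℝ} (hε : 0 < ε) :
    ∃ p₀ : Measure X, IsProbabilityMeasure p₀ ∧ klDiv q p₀ ≠ ∞ ∧
      ∀ μ : Measure X, IsProbabilityMeasure μ → klDiv μ p₀ ≤ klDiv μ p + ENNReal.ofReal ε := by
  let a : ℝ≥0 := (Real.exp (-ε)).toNNReal
  have ha : a ≠ 0 := (Real.toNNReal_pos.2 (Real.exp_pos _)).ne'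
  have ha_lt : a < 1 := Real.toNNReal_lt_one.2 (Real.exp_lt_one_iff.2 (neg_lt_zero.2 hε))
  have hsum : a + (1 - a) = 1 := add_tsub_cancel_of_le ha_lt.le
  have hlog : -Real.log a = ε := by simp [a, (Real.exp_pos _).le]
  have hp₀ : IsProbabilityMeasure (a • p + (1 - a) • q) :=
    convex_isProbabilityMeasure ‹_› ‹_› zero_le zero_le hsum
  refine ⟨a • p + (1 - a) • q, hp₀, ?_, fun μ _ ↦ ?_⟩
  · have hmem : a • p + (1 - a) • q ∈ openSegment ℝ≥0 p q :=
      ⟨a, 1 - a, pos_iff_ne_zero.2 ha, tsub_pos_of_lt ha_lt, hsum, rfl⟩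
    exact klDiv_ne_top_of_mem_openSegment (by simp) hmem
  · rw [← hlog]
    exact klDiv_smul_add_smul_right_le_add_ofReal ha hsum

theorem exists_le_klDiv_add_sum_mul_klDiv {ι : Type*} [Fintype ι] {q p : Measure X}
    {qi : ι → Measure X} [IsProbabilityMeasure q] [∀ i, IsProbabilityMeasure (qi i)]
    [IsProbabilityMeasure p] {b : ι → ℝ≥0} {F : ℝ≥0∞} (hp : ∀ i, klDiv (qi i) p < b i)
    (hF : ∀ r : Measure X, IsProbabilityMeasure r → (∀ i, klDiv (qi i) r ≤ b i) → F ≤ klDiv q r) :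
    ∃ l : ι → ℝ≥0, ∀ r : Measure X, IsProbabilityMeasure r →
      F + ∑ i, (l i : ℝ≥0∞) * b i ≤ klDiv q r + ∑ i, l i * klDiv (qi i) r := by
  obtain ⟨ε, hε_lt, hε⟩ : ∃ ε : ℝ, (∀ i, klDiv (qi i) p + ENNReal.ofReal ε < b i) ∧ 0 < ε := by
    have hlim (i : ι) : Filter.Tendsto (fun ε ↦ klDiv (qi i) p + ENNReal.ofReal ε) (𝓝[>] 0)
        (𝓝 (klDiv (qi i) p)) := by
      have hcont : Continuous fun ε ↦ klDiv (qi i) p + ENNReal.ofReal ε :=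
        continuous_const.add ENNReal.continuous_ofReal
      simpa using (hcont.tendsto 0).mono_left nhdsWithin_le_nhds
    have hev := Filter.eventually_all.2 fun i ↦ (hlim i).eventually_lt_const (hp i)
    exact (hev.and self_mem_nhdsWithin).exists
  obtain ⟨p₀, hp₀, hqp₀, hle⟩ := exists_klDiv_ne_top_forall_klDiv_le q p hε
  have hp₀_lt (i : ι) : klDiv (qi i) p₀ < b i := (hle (qi i) inferInstance).trans_lt (hε_lt i)
  lift F to ℝ≥0 using ne_top_of_le_ne_top hqp₀ (hF p₀ hp₀ fun i ↦ (hp₀_lt i).le)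
  have hconv (μ : Measure X) [IsProbabilityMeasure μ] :
      ConvexOn ℝ≥0 {r : Measure X | IsProbabilityMeasure r} (klDiv μ) :=
    (convexOn_klDiv_right μ).subset (fun r (_ : IsProbabilityMeasure r) ↦
      (inferInstance : IsFiniteMeasure r)) convex_isProbabilityMeasure
  exact exists_lagrange_multiplier_of_openSegment_ne_top (hconv q) (fun i ↦ hconv (qi i))
    hp₀ hqp₀ hp₀_lt
    (fun i r (_ : IsProbabilityMeasure r) y hy ↦
      klDiv_ne_top_of_mem_openSegment (hp₀_lt i).ne_top hy) hF

end IsProbabilityMeasure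

end KL

section Duality

variable {X : Type*} [MeasurableSpace X]

theorem KL_eq_klDiv (μ ν : Measure X) [IsProbabilityMeasure μ] [IsProbabilityMeasure ν] :
    KL μ ν = klDiv μ ν := by
  rw [KL]
  split_ifs with h
  · have hkl := klDiv_ne_top h.1 h.2
    rw [← toReal_klDiv_of_measure_eq h.1 (by simp), EReal.coe_ennreal_toReal hkl]
  · rw [not_ne_iff.1 (mt klDiv_ne_top_iff.1 h), EReal.coe_ennreal_top]

variable {m : ℕ} {q p : Measure X} {qi : Fin m → Measure X}

theorem Lagrangian_add_sum_mul [IsProbabilityMeasure q] [∀ i, IsProbabilityMeasure (qi i)]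
    [IsProbabilityMeasure p] (b : Fin m → ℝ) (l : Fin m → ℝ≥0) :
    Lagrangian q qi b p (fun i ↦ l i) + (∑ i, l i * b i : ℝ) =
      (klDiv q p + ∑ i, l i * klDiv (qi i) p : ℝ≥0∞) := by
  have hterm (i : Fin m) : ((l i : ℝ) : EReal) * (klDiv (qi i) p - b i) + (l i * b i : ℝ) =
      (l i * klDiv (qi i) p : ℝ≥0∞) := by
    rw [EReal.coe_mul, ← EReal.left_distrib_of_nonneg_of_ne_top
      (EReal.coe_nonneg.2 (l i).coe_nonneg) (EReal.coe_ne_top _), EReal.sub_add_cancel,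
      EReal.coe_ennreal_mul]
    rfl
  have hsum_real : ((∑ i, l i * b i : ℝ) : EReal) = ∑ i, ((l i * b i : ℝ) : EReal) :=
    map_sum (⟨⟨(↑), EReal.coe_zero⟩, EReal.coe_add⟩ : ℝ →+ EReal) _ _
  have hsum_ennreal : ((∑ i, l i * klDiv (qi i) p : ℝ≥0∞) : EReal) =
      ∑ i, ((l i * klDiv (qi i) p : ℝ≥0∞) : EReal) :=
    map_sum (⟨⟨(↑), EReal.coe_ennreal_zero⟩, EReal.coe_ennreal_add⟩ : ℝ≥0∞ →+ EReal) _ _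
  simp only [Lagrangian, KL_eq_klDiv, EReal.coe_ennreal_add, hsum_real, hsum_ennreal, add_assoc,
    ← Finset.sum_add_distrib, hterm]

theorem dualFn_le_KL {b l : Fin m → ℝ} [hp : IsProbabilityMeasure p]
    (hpb : ∀ i, KL (qi i) p ≤ b i) (hl : ∀ i, 0 ≤ l i) : dualFn q qi b l ≤ KL q p := by
  have hterm (i : Fin m) : (l i : EReal) * (KL (qi i) p - b i) ≤ 0 :=
    mul_nonpos_of_nonneg_of_nonpos (EReal.coe_nonneg.2 (hl i)) (EReal.sub_nonpos.2 (hpb i))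
  calc dualFn q qi b l ≤ Lagrangian q qi b p l :=
        iInf_le_of_le ⟨p, hp⟩ le_rfl
    _ ≤ KL q p + 0 := add_le_add_right (Finset.sum_nonpos fun i _ ↦ hterm i) _
    _ = KL q p := add_zero _

theorem exists_le_dualFn [IsProbabilityMeasure q] [∀ i, IsProbabilityMeasure (qi i)]
    [IsProbabilityMeasure p] {b : Fin m → ℝ} {F : EReal} (hp : ∀ i, KL (qi i) p < b i)
    (hF : ∀ r : Measure X, IsProbabilityMeasure r → (∀ i, KL (qi i) r ≤ b i) → F ≤ KL q r) :
    ∃ l : Fin m → ℝ≥0, F ≤ dualFn q qi b fun i ↦ l i := by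
  have hb (i : Fin m) : 0 ≤ b i := by
    have hpos := (EReal.coe_ennreal_nonneg _).trans_lt (KL_eq_klDiv (qi i) p ▸ hp i)
    exact (EReal.coe_pos.1 hpos).le
  lift b to Fin m → ℝ≥0 using hb
  have hcoe (i : Fin m) : ((b i : ℝ) : EReal) = (b i : ℝ≥0∞) := rfl
  simp only [hcoe, KL_eq_klDiv, EReal.coe_ennreal_lt_coe_ennreal_iff] at hp
  obtain ⟨l, hl⟩ := exists_le_klDiv_add_sum_mul_klDiv (F := F.toENNReal) hp fun r hr hrb ↦ by
    have hle := hF r hr fun i ↦ by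
      rw [KL_eq_klDiv, hcoe]
      exact_mod_cast hrb i
    rw [KL_eq_klDiv] at hle
    simpa using EReal.toENNReal_le_toENNReal hle
  have hF_le : F ≤ F.toENNReal := EReal.coe_toENNReal_eq_max ▸ le_max_right 0 F
  refine ⟨l, hF_le.trans (le_iInf fun ⟨r, hr⟩ ↦ ?_)⟩
  rw [← (EReal.addLECancellable_coe (∑ i, l i * b i)).add_le_add_iff_right,
    Lagrangian_add_sum_mul]
  have hcoe_add : (F.toENNReal : EReal) + (∑ i, l i * b i : ℝ) =
      (F.toENNReal + ∑ i, (l i : ℝ≥0∞) * b i : ℝ≥0∞) := by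
    rw [EReal.coe_ennreal_add]
    congr 1
    norm_cast
  rw [hcoe_add]
  exact_mod_cast hl r hr

/-- The objective values `KL(q‖p)` of the probability measures `p` that satisfy the constraints
`KL(qⁱ‖p) ≤ bᵢ`; their infimum is the optimal value `F*` of the primal problem. -/
def feasibleValues (q : Measure X) (qi : Fin m → Measure X) (b : Fin m → ℝ) : Set EReal :=
  {x | ∃ p : Measure X, IsProbabilityMeasure p ∧ (∀ i, KL (qi i) p ≤ b i) ∧ x = KL q p}

end Duality

/-- strong duality: under the Slater condition, the optimal value
`F* = inf {KL(q‖p) : KL(qⁱ‖p) ≤ bᵢ ∀ i}` equals the optimal dual value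
`D* = sup_{λ ≥ 0} g(λ)`, and the dual supremum is attained at some `λ* ≥ 0`. -/
theorem stmt1 {X : Type*} [MeasurableSpace X] {m : ℕ}
    (q : Measure X) [IsProbabilityMeasure q]
    (qi : Fin m → Measure X) (hqi : ∀ i, IsProbabilityMeasure (qi i))
    (b : Fin m → ℝ)
    (hSlater : ∃ phat : Measure X, IsProbabilityMeasure phat ∧
      ∃ ζ : ℝ, 0 < ζ ∧ ∀ i, KL (qi i) phat ≤ ((b i - ζ : ℝ) : EReal)) :
    sInf {x : EReal | ∃ p : Measure X, IsProbabilityMeasure p ∧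
        (∀ i, KL (qi i) p ≤ (b i : EReal)) ∧ x = KL q p}
      = (⨆ l ∈ {l : Fin m → ℝ | ∀ i, 0 ≤ l i}, dualFn q qi b l) ∧
    ∃ lstar ∈ {l : Fin m → ℝ | ∀ i, 0 ≤ l i},
      dualFn q qi b lstar = ⨆ l ∈ {l : Fin m → ℝ | ∀ i, 0 ≤ l i}, dualFn q qi b l := by
  obtain ⟨phat, hphat, ζ, hζ, hKL⟩ := hSlater
  have hlt (i : Fin m) : KL (qi i) phat < b i :=
    (hKL i).trans_lt (EReal.coe_lt_coe_iff.2 (sub_lt_self _ hζ))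
  obtain ⟨l, hdual⟩ := exists_le_dualFn (F := sInf (feasibleValues q qi b)) hlt
    fun p hp hpb ↦ sInf_le ⟨p, hp, hpb, rfl⟩
  have hl (i : Fin m) : 0 ≤ (l i : ℝ) := (l i).coe_nonneg
  have hsup := le_iSup₂ (f := fun l (_ : l ∈ {l : Fin m → ℝ | ∀ i, 0 ≤ l i}) ↦ dualFn q qi b l)
    (fun i ↦ (l i : ℝ)) hl
  have hweak : ⨆ l ∈ {l : Fin m → ℝ | ∀ i, 0 ≤ l i}, dualFn q qi b l ≤
      sInf (feasibleValues q qi b) := by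
    refine iSup₂_le fun l hl ↦ le_sInf ?_
    rintro _ ⟨p, _, hpb, rfl⟩
    exact dualFn_le_KL hpb hl
  exact ⟨le_antisymm (hdual.trans hsup) hweak, _, hl, le_antisymm hsup (hweak.trans hdual)⟩
end

section
/- Let q⁰, q¹, …, qᵐ be pairwise mutually singular probability measures on a measurable space X and let λ ∈ ℝ₊ᵐ with λᵢ > 0 for all i. Define the mixture q_mix^{(λ)} = (q⁰ + Σⱼ λⱼ qʲ)/(1 + Σⱼ λⱼ). Then KL(qⁱ‖q_mix^{(λ)}) = log((1 + Σⱼ λⱼ)/λᵢ) for every i = 1, …, m, and KL(q⁰‖q_mix^{(λ)}) = log(1 + Σⱼ λⱼ). -/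
open MeasureTheory

/-- The mixture distribution `q_mix^{(λ)} = (q⁰ + ∑ i, λ i • qⁱ) / (1 + ∑ i, λ i)`. -/
noncomputable def qMix {X : Type*} [MeasurableSpace X] {m : ℕ}
    (q0 : Measure X) (qi : Fin m → Measure X) (l : Fin m → ℝ) : Measure X :=
  (ENNReal.ofReal (1 + ∑ i, l i))⁻¹ • (q0 + ∑ i, ENNReal.ofReal (l i) • qi i)

/-! If `μ ⟂ₘ ρ`, the density of `μ` with respect to `c • μ + ρ` is `μ`-almost everywhere the
constant `c⁻¹`. A mixture of mutually singular measures has this form for each component `μ`, with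
`c` its normalised weight, so the divergence is the integral of `log c⁻¹` against `μ`. The measure
`q⁰` is the component of weight `1`. -/

open scoped NNReal

section Density

variable {X : Type*} [MeasurableSpace X] {μ ρ : Measure X} {c : ℝ≥0}

lemma withDensity_indicator_smul_self_add (hc : c ≠ 0) {S : Set X} (hS : MeasurableSet S)
    (hμ : μ Sᶜ = 0) (hρ : ρ S = 0) :
    (c • μ + ρ).withDensity (S.indicator fun _ => (c⁻¹ : ℝ≥0)) = μ := by
  have hμS : μ.restrict S = μ := Measure.restrict_eq_self_of_ae_mem (mem_ae_iff.2 hμ)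
  rw [withDensity_indicator hS, withDensity_const, Measure.restrict_add, Measure.restrict_smul,
    hμS, Measure.restrict_eq_zero.2 hρ, add_zero, ← ENNReal.smul_def, inv_smul_smul₀ hc]

lemma haveLebesgueDecomposition_smul_self_add (h : μ ⟂ₘ ρ) (hc : c ≠ 0) :
    μ.HaveLebesgueDecomposition (c • μ + ρ) := by
  obtain ⟨S, hS, hμS, hρS⟩ := h
  rw [← compl_compl S] at hμS
  have := Measure.haveLebesgueDecomposition_withDensity (c • μ + ρ)
    (f := Sᶜ.indicator fun _ => (c⁻¹ : ℝ≥0)) (measurable_const.indicator hS.compl)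
  rwa [withDensity_indicator_smul_self_add hc hS.compl hμS hρS] at this

lemma rnDeriv_smul_self_add_of_mutuallySingular [SigmaFinite μ] (h : μ ⟂ₘ ρ) (hc : c ≠ 0) :
    μ.rnDeriv (c • μ + ρ) =ᵐ[μ] fun _ => (c⁻¹ : ℝ≥0) := by
  have := haveLebesgueDecomposition_smul_self_add h hc
  have hμ : μ ≪ c • μ := Measure.absolutelyContinuous_smul (ENNReal.coe_ne_zero.2 hc)
  have hadd : μ.rnDeriv (c • μ + ρ) =ᵐ[c • μ] μ.rnDeriv (c • μ) :=
    Measure.rnDeriv_add_right_of_absolutelyContinuous_of_mutuallySingular hμ (h.smul_nnreal c)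
  filter_upwards [hμ.ae_le hadd, Measure.rnDeriv_smul_right' μ μ hc, μ.rnDeriv_self]
    with x hadd hsmul hself
  rw [hadd, hsmul, Pi.smul_apply, hself, ENNReal.smul_def, smul_eq_mul, mul_one]

end Density

section Divergence

variable {X : Type*} [MeasurableSpace X] {μ ν ρ : Measure X} [IsFiniteMeasure μ]

lemma KL_eq_of_llr_ae_eq_const (hμν : μ ≪ ν) {r : ℝ} (h : llr μ ν =ᵐ[μ] fun _ => r) :
    KL μ ν = ((μ.real Set.univ * r : ℝ) : EReal) := by
  have hint : Integrable (llr μ ν) μ := (integrable_congr h).2 (integrable_const r)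
  rw [KL, if_pos ⟨hμν, hint⟩, integral_congr_ae h, integral_const, smul_eq_mul]

lemma KL_smul_self_add_of_mutuallySingular (h : μ ⟂ₘ ρ) {c : ℝ≥0} (hc : c ≠ 0) :
    KL μ (c • μ + ρ) = ((μ.real Set.univ * Real.log (c⁻¹ : ℝ≥0) : ℝ) : EReal) := by
  have hμ : μ ≪ c • μ := Measure.absolutelyContinuous_smul (ENNReal.coe_ne_zero.2 hc)
  refine KL_eq_of_llr_ae_eq_const (hμ.add_right ρ) ?_
  filter_upwards [rnDeriv_smul_self_add_of_mutuallySingular h hc] with x hx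
  rw [llr, hx, ENNReal.coe_toReal]

end Divergence

section Mixture

variable {X ι : Type*} [MeasurableSpace X]

/-- The mixture `(∑ j, w j)⁻¹ • ∑ j, w j • q j` of a family of measures with unnormalised weights,
which treats `q⁰` and the `qⁱ` of `qMix` alike. For weights that are not summable,
`tsum` and the inverse are `0` by convention, and so is the mixture. -/
noncomputable def mixture (q : ι → Measure X) (w : ι → ℝ≥0) : Measure X :=
  (∑' j, w j)⁻¹ • Measure.sum fun j => w j • q j

lemma mixture_eq_smul_add (q : ι → Measure X) (w : ι → ℝ≥0) (i : ι) :
    mixture q w = (w i / ∑' j, w j) • q i +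
      (∑' j, w j)⁻¹ • Measure.sum fun j : ({i}ᶜ : Set ι) => w j • q j := by
  have hsingle : (Measure.sum fun j : ({i} : Set ι) => w j • q j) = w i • q i := by
    rw [Measure.sum_fintype, Fintype.sum_unique, Set.default_coe_singleton]
  rw [mixture, ← Measure.sum_add_sum_compl {i}, hsingle, smul_add, smul_smul, div_eq_inv_mul]

lemma mutuallySingular_smul_sum_smul [Countable ι] {μ : Measure X} {q : ι → Measure X}
    (h : ∀ j, μ ⟂ₘ q j) (c : ℝ≥0) (w : ι → ℝ≥0) :
    μ ⟂ₘ c • Measure.sum fun j => w j • q j := by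
  have hsum : μ ⟂ₘ Measure.sum fun j => w j • q j :=
    Measure.MutuallySingular.sum_right.2 fun j => ((h j).symm.smul_nnreal (w j)).symm
  exact (hsum.symm.smul_nnreal c).symm

lemma qMix_eq_mixture {m : ℕ} (q0 : Measure X) (qi : Fin m → Measure X) (l : Fin m → ℝ≥0) :
    qMix q0 qi (fun j => l j) =
      mixture (fun j : Option (Fin m) => j.elim q0 qi) (fun j => j.elim 1 l) := by
  have hinv : (ENNReal.ofReal (1 + ∑ j, (l j : ℝ)))⁻¹ = ((1 + ∑ j, l j)⁻¹ : ℝ≥0) := by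
    rw [← NNReal.coe_sum, ← NNReal.coe_one, ← NNReal.coe_add, ENNReal.ofReal_coe_nnreal,
      ENNReal.coe_inv (by positivity)]
  simp only [qMix, mixture, hinv, ENNReal.ofReal_coe_nnreal, ← ENNReal.smul_def,
    Measure.sum_fintype, tsum_fintype, Fintype.sum_option, Option.elim, one_smul]

lemma pairwise_option_elim {α β : Type*} {r : β → β → Prop} (hr : ∀ x y, r x y → r y x) {b : β}
    {f : α → β} (hb : ∀ i, r b (f i)) (hf : Pairwise fun i j => r (f i) (f j)) :
    Pairwise fun i j : Option α => r (i.elim b f) (j.elim b f) := by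
  rintro (_ | i) (_ | j) hij
  exacts [(hij rfl).elim, hb j, hr _ _ (hb i), hf (ne_of_apply_ne some hij)]

theorem stmt6_general [Countable ι] (q : ι → Measure X) {w : ι → ℝ≥0} (hw : Summable w) (i : ι)
    [IsFiniteMeasure (q i)] (hsing : ∀ j ≠ i, q i ⟂ₘ q j) (hi : 0 < w i) :
    KL (q i) (mixture q w) =
      (((q i).real Set.univ * Real.log ((∑' j, w j : ℝ≥0) / w i) : ℝ) : EReal) := by
  have hc : w i / ∑' j, w j ≠ 0 := (div_pos hi (NNReal.tsum_pos hw i hi)).ne'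
  have hrest : q i ⟂ₘ (∑' j, w j)⁻¹ • Measure.sum fun j : ({i}ᶜ : Set ι) => w j • q j :=
    mutuallySingular_smul_sum_smul (fun j : ({i}ᶜ : Set ι) => hsing j j.2) _ fun j => w j
  rw [mixture_eq_smul_add q w i, KL_smul_self_add_of_mutuallySingular hrest hc, inv_div,
    NNReal.coe_div]

end Mixture

/-- for pairwise mutually singular probability measures `q⁰, q¹, …, qᵐ` and
`λ` with strictly positive entries, `KL(qⁱ‖q_mix^{(λ)}) = log((1 + ∑ j λⱼ)/λᵢ)` for
`i = 1, …, m`, and `KL(q⁰‖q_mix^{(λ)}) = log(1 + ∑ j λⱼ)`. -/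
theorem stmt6 {X : Type*} [MeasurableSpace X] {m : ℕ}
    (q0 : Measure X) [IsProbabilityMeasure q0]
    (qi : Fin m → Measure X) (hqi : ∀ i, IsProbabilityMeasure (qi i))
    (hsing0 : ∀ i, q0 ⟂ₘ qi i)
    (hsing : Pairwise fun i j => qi i ⟂ₘ qi j)
    (l : Fin m → ℝ) (hl : ∀ i, 0 < l i) :
    (∀ i, KL (qi i) (qMix q0 qi l) = ((Real.log ((1 + ∑ j, l j) / l i) : ℝ) : EReal)) ∧
    KL q0 (qMix q0 qi l) = ((Real.log (1 + ∑ j, l j) : ℝ) : EReal) := by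
  lift l to Fin m → ℝ≥0 using fun j => (hl j).le
  let q (j : Option (Fin m)) : Measure X := j.elim q0 qi
  have hq : ∀ j, IsProbabilityMeasure (q j) := Option.forall.2 ⟨‹_›, hqi⟩
  have hKL (i : Option (Fin m)) := stmt6_general q (w := fun j => j.elim 1 l) Summable.of_finite i
    fun j hj => pairwise_option_elim (fun _ _ => .symm) hsing0 hsing hj.symm
  rw [qMix_eq_mixture]
  exact ⟨fun i => by simpa [q, tsum_fintype] using hKL (some i) (hl i),
    by simpa [q, tsum_fintype] using hKL none one_pos⟩
end

section
/- Let q⁰, q¹, …, qᵐ be pairwise mutually singular probability measures on a measurable space X and b ∈ ℝᵐ. Then there exists a probability measure p on X with KL(q⁰‖p) < ∞ and KL(qⁱ‖p) ≤ bᵢ for all i = 1, …, m if and only if Σ_{i=1}^m e^{−bᵢ} < 1. -/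
open MeasureTheory

/-!
If `q` is concentrated on `A`, Jensen's inequality gives `exp (-KL(q‖p)) ≤ p A`. Pairwise mutually
singular `qᵢ` are concentrated on disjoint sets, so `∑ exp (-KL(qᵢ‖p)) ≤ 1`; finiteness of
`KL(q⁰‖p)` makes one further term positive and the inequality strict. Conversely, `c • q ≤ p` forces
`KL(q‖p) ≤ -log c`, so the mixture `(1 - ∑ exp (-bᵢ)) q⁰ + ∑ exp (-bᵢ) qᵢ` meets all the bounds.
-/

section UpperBound

variable {X : Type*} [MeasurableSpace X] {μ ν : Measure X} {c : ENNReal}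

lemma llr_nonpos_of_le [SigmaFinite ν] (h : μ ≤ ν) : llr μ ν ≤ᵐ[ν] 0 := by
  filter_upwards [Measure.rnDeriv_le_one_of_le h] with x hx
  exact Real.log_nonpos ENNReal.toReal_nonneg (ENNReal.toReal_mono ENNReal.one_ne_top hx)

lemma absolutelyContinuous_of_smul_le (hc : c ≠ 0) (h : c • μ ≤ ν) : μ ≪ ν :=
  (Measure.absolutelyContinuous_smul hc).trans h.absolutelyContinuous

lemma llr_le_neg_log_of_smul_le [IsFiniteMeasure μ] [SigmaFinite ν] (hc : c ≠ 0) (hc' : c ≠ ⊤)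
    (h : c • μ ≤ ν) : ∀ᵐ x ∂μ, llr μ ν x ≤ -Real.log c.toReal := by
  have hac : μ ≪ ν := absolutelyContinuous_of_smul_le hc h
  filter_upwards [llr_smul_left hac c hc hc', hac.ae_le (llr_nonpos_of_le h)] with x hadd hnonpos
  rw [hadd, Pi.zero_apply] at hnonpos
  linarith

lemma integrable_llr_of_smul_le [IsFiniteMeasure μ] [IsFiniteMeasure ν] (hc : c ≠ 0) (hc' : c ≠ ⊤)
    (h : c • μ ≤ ν) : Integrable (llr μ ν) μ := by
  have lower : ∀ᵐ x ∂μ, -(ν.rnDeriv μ x).toReal ≤ llr μ ν x := by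
    filter_upwards [exp_neg_llr (absolutelyContinuous_of_smul_le hc h)] with x hx
    linarith [Real.add_one_le_exp (-llr μ ν x)]
  exact integrable_of_le_of_le (measurable_llr μ ν).aestronglyMeasurable lower
    (llr_le_neg_log_of_smul_le hc hc' h) Measure.integrable_toReal_rnDeriv.neg (integrable_const _)

lemma KL_le_neg_log_of_smul_le [IsProbabilityMeasure μ] [IsFiniteMeasure ν] (h : c • μ ≤ ν) :
    KL μ ν ≤ -ENNReal.log c := by
  rcases eq_or_ne c 0 with rfl | hc
  · simp
  have hc' : c ≠ ⊤ := by
    have hmass : c ≤ ν Set.univ := by simpa using h Set.univ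
    exact (hmass.trans_lt (measure_lt_top ν _)).ne
  have hint := integrable_llr_of_smul_le hc hc' h
  rw [KL, if_pos ⟨absolutelyContinuous_of_smul_le hc h, hint⟩, ENNReal.log_pos_real hc hc',
    ← EReal.coe_neg, EReal.coe_le_coe_iff]
  calc ∫ x, llr μ ν x ∂μ ≤ ∫ _, -Real.log c.toReal ∂μ :=
        integral_mono_ae hint (integrable_const _) (llr_le_neg_log_of_smul_le hc hc' h)
    _ = -Real.log c.toReal := by simp

end UpperBound

section LowerBound

variable {X ι : Type*} [MeasurableSpace X]

lemma exp_neg_integral_llr_le_measureReal {μ ν : Measure X} [IsProbabilityMeasure μ]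
    [IsFiniteMeasure ν] (hac : μ ≪ ν) (hint : Integrable (llr μ ν) μ) {A : Set X}
    (hA : ∀ᵐ x ∂μ, x ∈ A) : Real.exp (-∫ x, llr μ ν x ∂μ) ≤ ν.real A := by
  have hexp : (fun x ↦ Real.exp (-llr μ ν x)) =ᵐ[μ] fun x ↦ (ν.rnDeriv μ x).toReal :=
    exp_neg_llr hac
  calc Real.exp (-∫ x, llr μ ν x ∂μ) = Real.exp (∫ x, -llr μ ν x ∂μ) := by rw [integral_neg]
    _ ≤ ∫ x, Real.exp (-llr μ ν x) ∂μ :=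
        convexOn_exp.map_integral_le Real.continuous_exp.continuousOn isClosed_univ (by simp)
          hint.neg (Measure.integrable_toReal_rnDeriv.congr hexp.symm)
    _ = ∫ x, (ν.rnDeriv μ x).toReal ∂μ := integral_congr_ae hexp
    _ = ∫ x in A, (ν.rnDeriv μ x).toReal ∂μ := by rw [Measure.restrict_eq_self_of_ae_mem hA]
    _ ≤ ν.real A := Measure.setIntegral_toReal_rnDeriv_le (measure_ne_top _ _)

lemma exp_neg_KL_le_measure {μ : Measure X} (ν : Measure X) [IsProbabilityMeasure μ]
    [IsFiniteMeasure ν] {A : Set X} (hA : ∀ᵐ x ∂μ, x ∈ A) : EReal.exp (-KL μ ν) ≤ ν A := by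
  rw [KL]
  split_ifs with h
  · rw [← EReal.coe_neg, EReal.exp_coe, ← ofReal_measureReal]
    exact ENNReal.ofReal_le_ofReal (exp_neg_integral_llr_le_measureReal h.1 h.2 hA)
  · simp

lemma exists_pairwise_disjoint_ae_mem [Countable ι] {μ : ι → Measure X}
    (h : Pairwise fun i j ↦ μ i ⟂ₘ μ j) :
    ∃ A : ι → Set X, (∀ i, MeasurableSet (A i)) ∧ (∀ i, ∀ᵐ x ∂μ i, x ∈ A i) ∧
      Pairwise fun i j ↦ Disjoint (A i) (A j) := by
  let N (i j : ι) (hij : i ≠ j) : Set X := (h hij).nullSet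
  refine ⟨fun i ↦ ⋂ (j) (hij : i ≠ j), (N i j hij)ᶜ ∩ N j i hij.symm, fun i ↦ ?_, fun i ↦ ?_,
    fun i j hij ↦ Set.disjoint_left.2 fun x hxi hxj ↦ ?_⟩
  · exact .iInter fun j ↦ .iInter fun hij ↦
      (h hij).measurableSet_nullSet.compl.inter (h hij.symm).measurableSet_nullSet
  · simp only [Set.mem_iInter, ae_all_iff]
    intro j hij
    exact (measure_eq_zero_iff_ae_notMem.1 (h hij).measure_nullSet).and
      (h hij.symm).measure_compl_nullSet
  · simp only [Set.mem_iInter] at hxi hxj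
    exact (hxi j hij).1 (hxj i hij.symm).2

lemma tsum_exp_neg_KL_le_measure_univ {μ : ι → Measure X} [∀ i, IsProbabilityMeasure (μ i)]
    (h : Pairwise fun i j ↦ μ i ⟂ₘ μ j) (ν : Measure X) [IsFiniteMeasure ν] :
    ∑' i, EReal.exp (-KL (μ i) ν) ≤ ν Set.univ := by
  rw [ENNReal.tsum_eq_iSup_sum]
  refine iSup_le fun s ↦ ?_
  obtain ⟨A, hmeas, hmem, hdisj⟩ :=
    exists_pairwise_disjoint_ae_mem (h.comp_of_injective (Subtype.val_injective (p := (· ∈ s))))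
  calc ∑ i ∈ s, EReal.exp (-KL (μ i) ν) = ∑ i : s, EReal.exp (-KL (μ i) ν) :=
        (Finset.sum_coe_sort s _).symm
    _ ≤ ∑ i : s, ν (A i) := Finset.sum_le_sum fun i _ ↦ exp_neg_KL_le_measure ν (hmem i)
    _ ≤ ν Set.univ := sum_measure_le_measure_univ (fun i _ ↦ (hmeas i).nullMeasurableSet)
        fun i _ j _ hij ↦ (hdisj hij).aedisjoint

lemma exp_neg_KL_add_tsum_exp_neg_KL_le_measure_univ {μ₀ : Measure X} {μ : ι → Measure X}
    [IsProbabilityMeasure μ₀] [∀ i, IsProbabilityMeasure (μ i)] (h₀ : ∀ i, μ₀ ⟂ₘ μ i)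
    (h : Pairwise fun i j ↦ μ i ⟂ₘ μ j) (ν : Measure X) [IsFiniteMeasure ν] :
    EReal.exp (-KL μ₀ ν) + ∑' i, EReal.exp (-KL (μ i) ν) ≤ ν Set.univ := by
  let Q : Unit ⊕ ι → Measure X := Sum.elim (fun _ ↦ μ₀) μ
  have : ∀ i, IsProbabilityMeasure (Q i) := Sum.rec (fun _ ↦ ‹_›) ‹_›
  have hQ : Pairwise fun i j ↦ Q i ⟂ₘ Q j := by
    rintro (_ | i) (_ | j) hij
    · exact absurd rfl hij
    · exact h₀ j
    · exact (h₀ i).symm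
    · exact h fun hij' ↦ hij (congrArg Sum.inr hij')
  calc EReal.exp (-KL μ₀ ν) + ∑' i, EReal.exp (-KL (μ i) ν) = ∑' i, EReal.exp (-KL (Q i) ν) := by
        simp [ENNReal.summable.tsum_sum ENNReal.summable, Q]
    _ ≤ ν Set.univ := tsum_exp_neg_KL_le_measure_univ hQ ν

end LowerBound

lemma exists_isProbabilityMeasure_smul_le {X ι : Type*} [MeasurableSpace X] (μ₀ : Measure X)
    (μ : ι → Measure X) [IsProbabilityMeasure μ₀] [∀ i, IsProbabilityMeasure (μ i)]
    {w : ι → ENNReal} (hw : ∑' i, w i ≤ 1) :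
    ∃ ν : Measure X, IsProbabilityMeasure ν ∧ (1 - ∑' i, w i) • μ₀ ≤ ν ∧ ∀ i, w i • μ i ≤ ν := by
  refine ⟨(1 - ∑' i, w i) • μ₀ + Measure.sum fun i ↦ w i • μ i, ⟨?_⟩, Measure.le_add_right le_rfl,
    fun i ↦ Measure.le_add_left (Measure.le_sum (fun i ↦ w i • μ i) i)⟩
  simp [tsub_add_cancel_of_le hw]

theorem stmt11_general {X ι : Type*} [MeasurableSpace X]
    (q0 : Measure X) [IsProbabilityMeasure q0]
    (qi : ι → Measure X) [∀ i, IsProbabilityMeasure (qi i)]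
    (hsing0 : ∀ i, q0 ⟂ₘ qi i)
    (hsing : Pairwise fun i j => qi i ⟂ₘ qi j)
    (b : ι → EReal) :
    (∃ p : Measure X, IsProbabilityMeasure p ∧ KL q0 p < ⊤ ∧ ∀ i, KL (qi i) p ≤ b i)
      ↔ ∑' i, EReal.exp (-b i) < 1 := by
  constructor
  · rintro ⟨p, _, h0, hi⟩
    have hpos : 0 < EReal.exp (-KL q0 p) := by simpa [bot_lt_iff_ne_bot] using h0.ne
    have hsum : EReal.exp (-KL q0 p) + ∑' i, EReal.exp (-KL (qi i) p) ≤ 1 := by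
      simpa using exp_neg_KL_add_tsum_exp_neg_KL_le_measure_univ hsing0 hsing p
    have hne : ∑' i, EReal.exp (-KL (qi i) p) ≠ ⊤ :=
      ((le_add_self.trans hsum).trans_lt ENNReal.one_lt_top).ne
    calc ∑' i, EReal.exp (-b i) ≤ ∑' i, EReal.exp (-KL (qi i) p) :=
          ENNReal.tsum_le_tsum fun i ↦ EReal.exp_monotone (EReal.neg_le_neg_iff.2 (hi i))
      _ < EReal.exp (-KL q0 p) + ∑' i, EReal.exp (-KL (qi i) p) := by
          simpa using ENNReal.add_lt_add_right hne hpos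
      _ ≤ 1 := hsum
  · intro hlt
    obtain ⟨p, hp, h0, hi⟩ := exists_isProbabilityMeasure_smul_le q0 qi hlt.le
    refine ⟨p, hp, (KL_le_neg_log_of_smul_le h0).trans_lt ?_, fun i ↦ ?_⟩
    · simpa [lt_top_iff_ne_top] using (tsub_pos_of_lt hlt).ne'
    · simpa using KL_le_neg_log_of_smul_le (hi i)

/-- feasibility criterion: for pairwise mutually singular probability
measures `q⁰, q¹, …, qᵐ` and thresholds `b`, there exists a probability measure `p` with
`KL(q⁰‖p) < ∞` and `KL(qⁱ‖p) ≤ bᵢ` for all `i` if and only if `∑ i, e^{−bᵢ} < 1`. -/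
theorem stmt11 {X : Type*} [MeasurableSpace X] {m : ℕ}
    (q0 : Measure X) [IsProbabilityMeasure q0]
    (qi : Fin m → Measure X) (hqi : ∀ i, IsProbabilityMeasure (qi i))
    (hsing0 : ∀ i, q0 ⟂ₘ qi i)
    (hsing : Pairwise fun i j => qi i ⟂ₘ qi j)
    (b : Fin m → ℝ) :
    (∃ p : Measure X, IsProbabilityMeasure p ∧ KL q0 p < (⊤ : EReal) ∧
        ∀ i, KL (qi i) p ≤ (b i : EReal))
      ↔ ∑ i, Real.exp (-b i) < 1 := by
  rw [stmt11_general q0 qi hsing0 hsing fun i ↦ (b i : EReal), tsum_fintype]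
  simp [← EReal.coe_neg, ← ENNReal.ofReal_sum_of_nonneg, Real.exp_nonneg]
end

section
/- Let H be a real normed space, K ⊆ H a nonempty compact convex set, f₀ : H → ℝ continuous and strictly convex, and f₁, …, f_m : H → ℝ continuous and convex. For λ ∈ ℝ₊ᵐ define g(λ) = min_{x ∈ K} [f₀(x) + Σᵢ λᵢ fᵢ(x)]. Then for each λ ∈ ℝ₊ᵐ the minimizer x*(λ) is unique, g is concave, and g is differentiable at every λ in the interior (0, ∞)ᵐ with ∂g/∂λᵢ (λ) = fᵢ(x*(λ)) for each i. -/
open Filter Set Topology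

/-!
Write `Φ x` for the linear form `λ ↦ ∑ i, λᵢ fᵢ(x)`. If `x` minimizes the Lagrangian at `λ`, then
`Φ x` is a supergradient of `g` at `λ`. Playing the supergradient inequality at `λ` against the one
at `μ`, where `y` is a minimizer, bounds the linearization error `|g μ - g λ - Φ x (μ - λ)|` by
`‖Φ y - Φ x‖ * ‖μ - λ‖`. By compactness, minimizers at `μ` converge to the unique minimizer at `λ`
as `μ → λ`, so this error is `o(‖μ - λ‖)`.
-/

theorem convexOn_sum {𝕜 E β ι : Type*} [Semiring 𝕜] [PartialOrder 𝕜] [AddCommMonoid E] [SMul 𝕜 E]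
    [AddCommMonoid β] [PartialOrder β] [IsOrderedAddMonoid β] [Module 𝕜 β]
    {s : Set E} {t : Finset ι} {f : ι → E → β}
    (hs : Convex 𝕜 s) (hf : ∀ i ∈ t, ConvexOn 𝕜 s (f i)) : ConvexOn 𝕜 s (∑ i ∈ t, f i) :=
  Finset.sum_induction f (ConvexOn 𝕜 s) (fun _ _ => ConvexOn.add) (convexOn_const 0 hs) hf

theorem existsUnique_isMinOn_of_strictConvexOn {X : Type*} [TopologicalSpace X] [AddCommMonoid X]
    [Module ℝ X] {K : Set X} {F : X → ℝ} (hK : IsCompact K) (hne : K.Nonempty)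
    (hcont : ContinuousOn F K) (hconv : StrictConvexOn ℝ K F) : ∃! x, x ∈ K ∧ IsMinOn F K x := by
  obtain ⟨x, hxK, hx⟩ := hK.exists_isMinOn hne hcont
  exact ⟨x, ⟨hxK, hx⟩, fun y ⟨hyK, hy⟩ => hconv.eq_of_isMinOn hy hx hyK hxK⟩

theorem tendsto_minimizer_of_unique {Λ X α : Type*} [TopologicalSpace Λ] [TopologicalSpace X]
    [TopologicalSpace α] [Preorder α] [OrderClosedTopology α] {K : Set X} {F : Λ → X → α}
    {ξ : Λ → X} {l : Λ} {x : X} (hK : IsCompact K)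
    (hF : ContinuousOn (Function.uncurry F) (univ ×ˢ K))
    (hξK : ∀ l', ξ l' ∈ K) (hξ : ∀ l', IsMinOn (F l') K (ξ l'))
    (huniq : ∀ y ∈ K, IsMinOn (F l) K y → y = x) : Tendsto ξ (𝓝 l) (𝓝 x) := by
  refine hK.tendsto_nhds_of_unique_mapClusterPt (Eventually.of_forall hξK) fun y hyK hy => ?_
  obtain ⟨U, hUl, hUy⟩ := mapClusterPt_iff_ultrafilter.1 hy
  have tendsto_F {η : Λ → X} {z : X} (hzK : z ∈ K) (hηK : ∀ l', η l' ∈ K)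
      (hη : Tendsto η U (𝓝 z)) : Tendsto (fun l' => F l' (η l')) U (𝓝 (F l z)) :=
    (hF (l, z) ⟨mem_univ l, hzK⟩).tendsto.comp <| tendsto_nhdsWithin_iff.2
      ⟨(tendsto_id'.2 hUl).prodMk_nhds hη, Eventually.of_forall fun l' => ⟨mem_univ l', hηK l'⟩⟩
  refine huniq y hyK fun z hzK => ?_
  exact le_of_tendsto_of_tendsto' (tendsto_F hyK hξK hUy)
    (tendsto_F hzK (fun _ => hzK) tendsto_const_nhds) fun l' => hξ l' hzK

section Duality

variable {E X : Type*} [NormedAddCommGroup E] [NormedSpace ℝ E]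
  {K : Set X} {f₀ : X → ℝ} {Φ : X → StrongDual ℝ E} {l l' : E} {x x' : X}

/-- The Lagrangian `f₀(x) + ⟨Φ(x), l⟩` with objective `f₀` and multipliers `l` in a normed space
`E`. The constraints are bundled into a map `Φ` with values in the dual of `E`. -/
def lagrangian (f₀ : X → ℝ) (Φ : X → StrongDual ℝ E) (l : E) (x : X) : ℝ :=
  f₀ x + Φ x l

/-- The dual function: the infimum over `K` of the Lagrangian, as a function of the multipliers.
It takes the junk value `0` where the Lagrangian is unbounded below on `K`, or if `K` is empty. -/
noncomputable def dualFunction (K : Set X) (f₀ : X → ℝ) (Φ : X → StrongDual ℝ E) (l : E) : ℝ :=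
  sInf (lagrangian f₀ Φ l '' K)

theorem lagrangian_eq_add_sub : lagrangian f₀ Φ l' x = lagrangian f₀ Φ l x + Φ x (l' - l) := by
  simp only [lagrangian, map_sub]
  ring

theorem lagrangian_convexCombination {s t : ℝ} (hst : s + t = 1) :
    lagrangian f₀ Φ (s • l + t • l') x = s * lagrangian f₀ Φ l x + t * lagrangian f₀ Φ l' x := by
  simp only [lagrangian, map_add, map_smul, smul_eq_mul]
  linear_combination (-f₀ x) * hst

theorem dualFunction_le_lagrangian (hbdd : BddBelow (lagrangian f₀ Φ l '' K)) (hx : x ∈ K) :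
    dualFunction K f₀ Φ l ≤ lagrangian f₀ Φ l x :=
  csInf_le hbdd (mem_image_of_mem _ hx)

theorem dualFunction_eq_lagrangian (hx : x ∈ K) (hmin : IsMinOn (lagrangian f₀ Φ l) K x) :
    dualFunction K f₀ Φ l = lagrangian f₀ Φ l x :=
  IsLeast.csInf_eq ⟨mem_image_of_mem _ hx, forall_mem_image.2 hmin⟩

theorem concaveOn_dualFunction (hne : K.Nonempty)
    (hbdd : ∀ l, BddBelow (lagrangian f₀ Φ l '' K)) :
    ConcaveOn ℝ univ (dualFunction K f₀ Φ) := by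
  refine ⟨convex_univ, fun a _ b _ s t hs ht hst => ?_⟩
  refine le_csInf (hne.image _) (forall_mem_image.2 fun x hx => ?_)
  rw [lagrangian_convexCombination hst, smul_eq_mul, smul_eq_mul]
  gcongr
  exacts [dualFunction_le_lagrangian (hbdd a) hx, dualFunction_le_lagrangian (hbdd b) hx]

theorem dualFunction_le_add_of_isMinOn (hbdd : BddBelow (lagrangian f₀ Φ l' '' K)) (hx : x ∈ K)
    (hmin : IsMinOn (lagrangian f₀ Φ l) K x) :
    dualFunction K f₀ Φ l' ≤ dualFunction K f₀ Φ l + Φ x (l' - l) := by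
  rw [dualFunction_eq_lagrangian hx hmin, ← lagrangian_eq_add_sub]
  exact dualFunction_le_lagrangian hbdd hx

theorem abs_dualFunction_sub_sub_le (hx : x ∈ K) (hmin : IsMinOn (lagrangian f₀ Φ l) K x)
    (hx' : x' ∈ K) (hmin' : IsMinOn (lagrangian f₀ Φ l') K x') :
    |dualFunction K f₀ Φ l' - dualFunction K f₀ Φ l - Φ x (l' - l)| ≤
      ‖Φ x' - Φ x‖ * ‖l' - l‖ := by
  have upper := dualFunction_le_add_of_isMinOn hmin'.bddBelow hx hmin
  have lower := dualFunction_le_add_of_isMinOn hmin.bddBelow hx' hmin'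
  rw [← neg_sub l' l, map_neg] at lower
  have hΦ := neg_le_of_abs_le ((Φ x' - Φ x).le_opNorm (l' - l))
  rw [sub_apply] at hΦ
  exact abs_le.2 ⟨by linarith, by linarith [norm_nonneg (Φ x' - Φ x), norm_nonneg (l' - l)]⟩

variable [TopologicalSpace X]

theorem continuousOn_uncurry_lagrangian (hf₀ : ContinuousOn f₀ K) (hΦ : ContinuousOn Φ K) :
    ContinuousOn (Function.uncurry (lagrangian f₀ Φ)) (univ ×ˢ K) := by
  have hsnd : MapsTo Prod.snd (univ ×ˢ K : Set (E × X)) K := fun _ hp => hp.2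
  exact (hf₀.comp continuousOn_snd hsnd).add ((hΦ.comp continuousOn_snd hsnd).clm_apply
    continuousOn_fst)

theorem continuousOn_lagrangian (hf₀ : ContinuousOn f₀ K) (hΦ : ContinuousOn Φ K) (l : E) :
    ContinuousOn (lagrangian f₀ Φ l) K :=
  hf₀.add (hΦ.clm_apply continuousOn_const)

theorem hasFDerivAt_dualFunction (hK : IsCompact K) (hf₀ : ContinuousOn f₀ K)
    (hΦ : ContinuousOn Φ K) (hx : x ∈ K) (hmin : IsMinOn (lagrangian f₀ Φ l) K x)
    (huniq : ∀ y ∈ K, IsMinOn (lagrangian f₀ Φ l) K y → y = x) :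
    HasFDerivAt (dualFunction K f₀ Φ) (Φ x) l := by
  choose ξ hξK hξ using fun l' =>
    hK.exists_isMinOn ⟨x, hx⟩ (continuousOn_lagrangian hf₀ hΦ l')
  have tendsto_ξ : Tendsto ξ (𝓝 l) (𝓝[K] x) := tendsto_nhdsWithin_iff.2
    ⟨tendsto_minimizer_of_unique hK (continuousOn_uncurry_lagrangian hf₀ hΦ) hξK hξ huniq,
      Eventually.of_forall hξK⟩
  have tendsto_Φ : Tendsto (fun l' => ‖Φ (ξ l') - Φ x‖) (𝓝 l) (𝓝 0) :=
    tendsto_iff_norm_sub_tendsto_zero.1 ((hΦ x hx).tendsto.comp tendsto_ξ)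
  refine hasFDerivAt_iff_isLittleO.2 (Asymptotics.isLittleO_iff.2 fun c hc => ?_)
  filter_upwards [tendsto_Φ.eventually (gt_mem_nhds hc)] with l' hl'
  calc |dualFunction K f₀ Φ l' - dualFunction K f₀ Φ l - Φ x (l' - l)|
      ≤ ‖Φ (ξ l') - Φ x‖ * ‖l' - l‖ := abs_dualFunction_sub_sub_le hx hmin (hξK l') (hξ l')
    _ ≤ c * ‖l' - l‖ := by gcongr

end Duality

section FiniteConstraints

variable {ι X : Type*} [Fintype ι] {K : Set X} {f₀ : X → ℝ} {f : ι → X → ℝ} {l : ι → ℝ}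

/-- The constraint functions `f i` as a dual-valued map, for use in `lagrangian`: at `x` it is the
linear form `l ↦ ∑ i, l i * f i x` on vectors of multipliers. -/
noncomputable def constraintForm (f : ι → X → ℝ) (x : X) : StrongDual ℝ (ι → ℝ) :=
  ∑ i, f i x • ContinuousLinearMap.proj i

theorem lagrangian_constraintForm (f₀ : X → ℝ) (f : ι → X → ℝ) (l : ι → ℝ) :
    lagrangian f₀ (constraintForm f) l = fun x => f₀ x + ∑ i, l i * f i x := by
  ext x
  simp [lagrangian, constraintForm, mul_comm]

theorem continuousOn_constraintForm [TopologicalSpace X] (hf : ∀ i, ContinuousOn (f i) K) :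
    ContinuousOn (constraintForm f) K :=
  continuousOn_finsetSum _ fun i _ => (hf i).smul continuousOn_const

theorem strictConvexOn_lagrangian_constraintForm [AddCommMonoid X] [Module ℝ X]
    (hf₀ : StrictConvexOn ℝ K f₀) (hf : ∀ i, ConvexOn ℝ K (f i)) (hl : 0 ≤ l) :
    StrictConvexOn ℝ K (lagrangian f₀ (constraintForm f) l) := by
  have hsum : ConvexOn ℝ K (∑ i, l i • f i) :=
    convexOn_sum hf₀.1 fun i _ => (hf i).smul (hl i)
  have hsplit : lagrangian f₀ (constraintForm f) l = f₀ + ∑ i, l i • f i := by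
    ext x
    simp [lagrangian_constraintForm]
  rw [hsplit]
  exact hf₀.add_convexOn hsum

end FiniteConstraints

theorem stmt13_general {ι H : Type*} [Fintype ι] [TopologicalSpace H] [AddCommMonoid H] [Module ℝ H]
    {K : Set H} (hKne : K.Nonempty) (hKcp : IsCompact K)
    {f₀ : H → ℝ} (hf₀c : ContinuousOn f₀ K) (hf₀ : StrictConvexOn ℝ K f₀)
    {f : ι → H → ℝ} (hfc : ∀ i, ContinuousOn (f i) K) (hf : ∀ i, ConvexOn ℝ K (f i))
    {g : (ι → ℝ) → ℝ}
    (hg : ∀ l : ι → ℝ, g l = sInf ((fun x => f₀ x + ∑ i, l i * f i x) '' K)) :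
    (∀ l : ι → ℝ, 0 ≤ l →
      ∃! x, x ∈ K ∧ IsMinOn (fun y => f₀ y + ∑ i, l i * f i y) K x) ∧
    ConcaveOn ℝ univ g ∧
    (∀ l : ι → ℝ, 0 ≤ l →
      ∀ x ∈ K, IsMinOn (fun y => f₀ y + ∑ i, l i * f i y) K x →
        HasFDerivAt g (∑ i, f i x • (ContinuousLinearMap.proj i : (ι → ℝ) →L[ℝ] ℝ)) l) := by
  simp only [← lagrangian_constraintForm] at hg ⊢
  obtain rfl : g = dualFunction K f₀ (constraintForm f) := funext hg
  have hΦ := continuousOn_constraintForm hfc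
  have hcont := continuousOn_lagrangian hf₀c hΦ
  have hconv (l : ι → ℝ) (hl : 0 ≤ l) := strictConvexOn_lagrangian_constraintForm hf₀ hf hl
  refine ⟨fun l hl => existsUnique_isMinOn_of_strictConvexOn hKcp hKne (hcont l) (hconv l hl),
    concaveOn_dualFunction hKne fun l => hKcp.bddBelow_image (hcont l), fun l hl x hx hmin => ?_⟩
  exact hasFDerivAt_dualFunction hKcp hf₀c hΦ hx hmin fun y hy hymin =>
    (hconv l hl).eq_of_isMinOn hymin hmin hy hx

/-- let `K` be a nonempty compact convex subset of a real normed space,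
`f₀` continuous and strictly convex, `f₁, …, f_m` continuous and convex, and
`g(λ) = min_{x ∈ K} [f₀(x) + ∑ i, λᵢ fᵢ(x)]`.  Then for each `λ ≥ 0` the minimizer is
unique, `g` is concave on `ℝ₊ᵐ`, and at every interior point `λ > 0` the function `g` is
differentiable with `∂g/∂λᵢ (λ) = fᵢ(x*(λ))`. -/
theorem stmt13 {H : Type*} [NormedAddCommGroup H] [NormedSpace ℝ H] {m : ℕ}
    (K : Set H) (hKne : K.Nonempty) (hKcp : IsCompact K) (hKcv : Convex ℝ K)
    (f0 : H → ℝ) (hf0c : Continuous f0) (hf0 : StrictConvexOn ℝ Set.univ f0)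
    (f : Fin m → H → ℝ) (hfc : ∀ i, Continuous (f i))
    (hf : ∀ i, ConvexOn ℝ Set.univ (f i))
    (g : (Fin m → ℝ) → ℝ)
    (hg : ∀ l : Fin m → ℝ, g l = sInf ((fun x => f0 x + ∑ i, l i * f i x) '' K)) :
    (∀ l : Fin m → ℝ, (∀ i, 0 ≤ l i) →
      ∃! x : H, x ∈ K ∧ IsMinOn (fun y => f0 y + ∑ i, l i * f i y) K x) ∧
    ConcaveOn ℝ {l : Fin m → ℝ | ∀ i, 0 ≤ l i} g ∧
    (∀ l : Fin m → ℝ, (∀ i, 0 < l i) →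
      ∀ x : H, x ∈ K → IsMinOn (fun y => f0 y + ∑ i, l i * f i y) K x →
        HasFDerivAt g
          (∑ i, f i x • (ContinuousLinearMap.proj i : (Fin m → ℝ) →L[ℝ] ℝ)) l) := by
  obtain ⟨hmin, hconc, hderiv⟩ := stmt13_general hKne hKcp hf0c.continuousOn
    (hf0.subset K.subset_univ hKcv) (fun i => (hfc i).continuousOn)
    (fun i => (hf i).subset K.subset_univ hKcv) hg
  exact ⟨hmin, hconc.subset (Set.subset_univ _) (convex_Ici (0 : Fin m → ℝ)),
    fun l hl => hderiv l fun i => (hl i).le⟩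
end

section
/- Let g, ḡ : ℝ₊ᵐ → ℝ with g(λ) ≤ ḡ(λ) ≤ g(λ) + 4R(1 + ‖λ‖₁)ν for all λ ∈ ℝ₊ᵐ, where R, ν ≥ 0. Let λ* ∈ ℝ₊ᵐ be a maximizer of g over ℝ₊ᵐ and λ̄* ∈ ℝ₊ᵐ a maximizer of ḡ over ℝ₊ᵐ. Suppose g is differentiable on the segment joining λ* and λ̄*, that g is μ-strongly concave on this segment with μ > 0, and that the first-order optimality condition ∇g(λ*)ᵀ(λ − λ*) ≤ 0 holds for all λ ∈ ℝ₊ᵐ. Then ‖λ̄* − λ*‖² ≤ (8/μ) R (1 + ‖λ̄*‖₁) ν. -/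
/-!
At a maximizer `x` of `g` the first-order condition makes the linear term of the strong concavity
inequality nonpositive, so `g` loses at least `μ / 2 * ‖y - x‖ ^ 2` on the way to any `y`. On the
other hand, the chain `g x ≤ gbar x ≤ gbar xbar ≤ g xbar + ε xbar` shows that on the way to a
maximizer `xbar` of `gbar` it loses at most `ε xbar`.
-/

theorem sub_le_of_isMaxOn_of_le_add {α β : Type*} [AddCommGroup β] [PartialOrder β]
    [IsOrderedAddMonoid β] {s : Set α} {f fbar : α → β} {x xbar : α} {c : β}
    (hmax : IsMaxOn fbar s xbar) (hx : x ∈ s) (hle : f x ≤ fbar x)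
    (hadd : fbar xbar ≤ f xbar + c) : f x - f xbar ≤ c :=
  sub_left_le_of_le_add <| calc
    f x ≤ fbar x := hle
    _ ≤ fbar xbar := hmax hx
    _ ≤ f xbar + c := hadd

section StrongSupergradient

variable {E : Type*} [SeminormedAddCommGroup E] [NormedSpace ℝ E]
  {μ : ℝ} {g gbar ε : E → ℝ} {s t : Set E} {x xbar y : E} {p : StrongDual ℝ E}

/-- The functional `p` is a `μ`-strong supergradient of `g` at `x`, relative to `t`: this is what
`μ`-strong concavity on `t` says about the derivative at the single base point `x`, stated so that
`g` need not be differentiable. -/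
def IsStrongSupergradientOn (μ : ℝ) (g : E → ℝ) (t : Set E) (x : E) (p : StrongDual ℝ E) : Prop :=
  ∀ y ∈ t, g y ≤ g x + p (y - x) - μ / 2 * ‖y - x‖ ^ 2

theorem IsStrongSupergradientOn.quadratic_growth (hp : IsStrongSupergradientOn μ g t x p)
    (hy : y ∈ t) (hpy : p (y - x) ≤ 0) : μ / 2 * ‖y - x‖ ^ 2 ≤ g x - g y := by
  linarith [hp y hy]

theorem stmt15_general (hμ : 0 < μ) (hgap : ∀ y ∈ s, g y ≤ gbar y ∧ gbar y ≤ g y + ε y)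
    (hx : x ∈ s) (hxbar : xbar ∈ s) (hmax : IsMaxOn gbar s xbar)
    (hp : IsStrongSupergradientOn μ g (segment ℝ x xbar) x p)
    (hfoc : ∀ y ∈ s, p (y - x) ≤ 0) :
    ‖xbar - x‖ ^ 2 ≤ 2 / μ * ε xbar := by
  have growth : μ / 2 * ‖xbar - x‖ ^ 2 ≤ g x - g xbar :=
    hp.quadratic_growth (right_mem_segment ℝ x xbar) (hfoc xbar hxbar)
  have loss : g x - g xbar ≤ ε xbar :=
    sub_le_of_isMaxOn_of_le_add hmax hx (hgap x hx).1 (hgap xbar hxbar).2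
  calc
    ‖xbar - x‖ ^ 2 = 2 / μ * (μ / 2 * ‖xbar - x‖ ^ 2) := by field_simp
    _ ≤ 2 / μ * ε xbar := by gcongr; exact growth.trans loss

end StrongSupergradient

theorem toLp_image_segment {V : Type*} [AddCommGroup V] [Module ℝ V] (p : ENNReal) (x y : V) :
    WithLp.toLp p '' segment ℝ x y = segment ℝ (WithLp.toLp p x) (WithLp.toLp p y) :=
  image_segment ℝ (WithLp.linearEquiv p ℝ V).symm.toLinearMap.toAffineMap x y

section Coordinates

variable {ι : Type*} [Fintype ι]

theorem sum_smul_proj_sub_toLp (v x : ι → ℝ) (y : EuclideanSpace ℝ ι) :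
    (∑ i, v i • (EuclideanSpace.proj i : StrongDual ℝ (EuclideanSpace ℝ ι)))
      (y - WithLp.toLp 2 x) = ∑ i, v i * (y i - x i) := by
  simp

theorem norm_sub_toLp_sq (x : ι → ℝ) (y : EuclideanSpace ℝ ι) :
    ‖y - WithLp.toLp 2 x‖ ^ 2 = ∑ i, (y i - x i) ^ 2 := by
  simp [EuclideanSpace.real_norm_sq_eq]

theorem isStrongSupergradientOn_toLp_image {μ : ℝ} {g : (ι → ℝ) → ℝ} {t : Set (ι → ℝ)}
    {x v : ι → ℝ}
    (h : ∀ y ∈ t, g y ≤ g x + ∑ i, v i * (y i - x i) - μ / 2 * ∑ i, (y i - x i) ^ 2) :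
    IsStrongSupergradientOn μ (fun y : EuclideanSpace ℝ ι ↦ g y.ofLp) (WithLp.toLp 2 '' t)
      (WithLp.toLp 2 x) (∑ i, v i • EuclideanSpace.proj i) := by
  rintro _ ⟨y, hy, rfl⟩
  simpa only [sum_smul_proj_sub_toLp, norm_sub_toLp_sq] using h y hy

end Coordinates

/-- let `g ≤ ḡ ≤ g + 4R(1 + ‖·‖₁)ν` on `ℝ₊ᵐ`, let `λ*` maximize `g` and
`λ̄*` maximize `ḡ` over `ℝ₊ᵐ`, suppose `g` is differentiable (with gradient `Dg`) and
`μ`-strongly concave on the segment joining `λ*` and `λ̄*`, and that the first-order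
optimality condition `∇g(λ*)ᵀ(λ − λ*) ≤ 0` holds for all `λ ≥ 0`.  Then
`‖λ̄* − λ*‖² ≤ (8/μ) R (1 + ‖λ̄*‖₁) ν`. -/
theorem stmt15 {m : ℕ} (g gbar : (Fin m → ℝ) → ℝ) (R ν μ : ℝ)
    (hR : 0 ≤ R) (hν : 0 ≤ ν) (hμ : 0 < μ)
    (hgap : ∀ l : Fin m → ℝ, (∀ i, 0 ≤ l i) →
      g l ≤ gbar l ∧ gbar l ≤ g l + 4 * R * (1 + ∑ i, |l i|) * ν)
    (lstar lbar : Fin m → ℝ) (hlstar : ∀ i, 0 ≤ lstar i) (hlbar : ∀ i, 0 ≤ lbar i)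
    (hmaxg : ∀ l : Fin m → ℝ, (∀ i, 0 ≤ l i) → g l ≤ g lstar)
    (hmaxgbar : ∀ l : Fin m → ℝ, (∀ i, 0 ≤ l i) → gbar l ≤ gbar lbar)
    (Dg : (Fin m → ℝ) → (Fin m → ℝ))
    (hdiff : ∀ l ∈ segment ℝ lstar lbar,
      HasFDerivAt g (∑ i, Dg l i • (ContinuousLinearMap.proj i : (Fin m → ℝ) →L[ℝ] ℝ)) l)
    (hconc : ∀ l1 ∈ segment ℝ lstar lbar, ∀ l2 ∈ segment ℝ lstar lbar,
      g l2 ≤ g l1 + ∑ i, Dg l1 i * (l2 i - l1 i) - μ / 2 * ∑ i, (l2 i - l1 i) ^ 2)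
    (hfoc : ∀ l : Fin m → ℝ, (∀ i, 0 ≤ l i) → ∑ i, Dg lstar i * (l i - lstar i) ≤ 0) :
    ∑ i, (lbar i - lstar i) ^ 2 ≤ (8 / μ) * R * (1 + ∑ i, |lbar i|) * ν := by
  have hp := isStrongSupergradientOn_toLp_image (hconc lstar (left_mem_segment ℝ _ _))
  rw [toLp_image_segment] at hp
  have h := stmt15_general (E := EuclideanSpace ℝ (Fin m)) (s := {l | ∀ i, 0 ≤ l i}) hμ
    (fun l ↦ hgap l.ofLp) hlstar hlbar (fun l ↦ hmaxgbar l.ofLp) hp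
    (fun l hl ↦ (sum_smul_proj_sub_toLp _ _ l).trans_le (hfoc l.ofLp hl))
  exact (norm_sub_toLp_sq lstar (WithLp.toLp 2 lbar)).symm.trans_le (h.trans_eq (by ring))
end

section
/- Let (Ω, 𝔽, ℙ) be a probability space and 𝒢 ⊆ 𝔽 a sub-σ-algebra. Let λ̄* ∈ ℝ₊ᵐ, let ḡ : ℝ₊ᵐ → ℝ, let λ be a 𝒢-measurable random vector with values in ℝ₊ᵐ, and let f̂ be an integrable random vector in ℝᵐ satisfying, almost surely: 𝔼[‖f̂‖² | 𝒢] ≤ S² and 𝔼[f̂ | 𝒢]ᵀ(λ − λ̄*) − ε² ≤ ḡ(λ) − ḡ(λ̄*). Let η > 0 and define the projected stochastic ascent update λ⁺ componentwise by λ⁺ᵢ = max(0, λᵢ + η f̂ᵢ). Then almost surely 𝔼[‖λ⁺ − λ̄*‖² | 𝒢] ≤ ‖λ − λ̄*‖² + η² S² − 2η (ḡ(λ̄*) − ḡ(λ) − ε²). -/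
open MeasureTheory

/-!
Write the update as `λ⁺ = P (λ + f)` with `f = η f̂` and `P` the projection. As `P` is nonexpansive
and fixes `λ*`, the new distance `‖λ⁺ - λ*‖` is at most `‖λ + f - λ*‖`. Expanding the square and
pulling the `𝒢`-measurable vector `λ - λ*` out of the conditional expectation gives
`𝔼[‖λ⁺ - λ*‖² | 𝒢] ≤ ‖λ - λ*‖² + 2 ⟪𝔼[f | 𝒢], λ - λ*⟫ + 𝔼[‖f‖² | 𝒢]`.

If `‖λ⁺ - λ*‖²` is integrable, then so is `‖λ - λ*‖²`, because `P λ = λ` puts `λ⁺` within `‖f‖`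
of `λ`. Otherwise Mathlib's conditional expectation on the left is `0` by convention, and the
right-hand side is at least `‖λ - λ* + 𝔼[f | 𝒢]‖²` by conditional Jensen.
-/

section CondExp

variable {Ω E : Type*} {m m0 : MeasurableSpace Ω} {μ : Measure Ω} [NormedAddCommGroup E]

lemma norm_condExp_sq_le [NormedSpace ℝ E] [CompleteSpace E] {f : Ω → E}
    (hf2 : Integrable (fun ω => ‖f ω‖ ^ 2) μ) :
    ∀ᵐ ω ∂μ, ‖(μ[f | m]) ω‖ ^ 2 ≤ (μ[fun ω' => ‖f ω'‖ ^ 2 | m]) ω := by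
  simp only [← Real.rpow_two] at hf2 ⊢
  exact Integrable.norm_condExp_rpow_le one_le_two hf2

lemma condExp_norm_smul_sq [NormedSpace ℝ E] (c : ℝ) (f : Ω → E) :
    μ[fun ω => ‖c • f ω‖ ^ 2 | m] =ᵐ[μ] fun ω => c ^ 2 * (μ[fun ω' => ‖f ω'‖ ^ 2 | m]) ω := by
  simp only [norm_smul, mul_pow, Real.norm_eq_abs, sq_abs]
  exact condExp_smul (c ^ 2) (fun ω => ‖f ω‖ ^ 2) m

lemma condExp_norm_add_sq [InnerProductSpace ℝ E] [CompleteSpace E]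
    (hm : m ≤ m0) [SigmaFinite (μ.trim hm)] {d f : Ω → E}
    (hdm : AEStronglyMeasurable[m] d μ) (hd : MemLp d 2 μ) (hf : MemLp f 2 μ)
    (hfi : Integrable f μ) :
    μ[fun ω => ‖d ω + f ω‖ ^ 2 | m] =ᵐ[μ] fun ω =>
      ‖d ω‖ ^ 2 + 2 * inner ℝ ((μ[f | m]) ω) (d ω) + (μ[fun ω' => ‖f ω'‖ ^ 2 | m]) ω := by
  have hd2 : Integrable (fun ω => ‖d ω‖ ^ 2) μ := hd.integrable_norm_pow two_ne_zero
  have hf2 : Integrable (fun ω => ‖f ω‖ ^ 2) μ := hf.integrable_norm_pow two_ne_zero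
  have hfd : Integrable (fun ω => inner ℝ (f ω) (d ω)) μ :=
    memLp_one_iff_integrable.1 ((innerSL ℝ).memLp_of_bilin 1 hf hd)
  have expand : (fun ω => ‖d ω + f ω‖ ^ 2) =
      (fun ω => ‖d ω‖ ^ 2) + (2 : ℝ) • (fun ω => inner ℝ (f ω) (d ω)) + fun ω => ‖f ω‖ ^ 2 := by
    ext ω
    simp [norm_add_sq_real, real_inner_comm]
  have known : μ[fun ω => ‖d ω‖ ^ 2 | m] =ᵐ[μ] fun ω => ‖d ω‖ ^ 2 :=
    condExp_of_aestronglyMeasurable' hm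
      ((continuous_norm.pow 2).comp_aestronglyMeasurable hdm) hd2
  have pullOut : μ[fun ω => inner ℝ (f ω) (d ω) | m] =ᵐ[μ]
      fun ω => inner ℝ ((μ[f | m]) ω) (d ω) :=
    condExp_bilin_of_aestronglyMeasurable_right (innerSL ℝ) hdm hfd hfi
  rw [expand]
  filter_upwards [condExp_add (hd2.add (hfd.smul (2 : ℝ))) hf2 m,
    condExp_add hd2 (hfd.smul (2 : ℝ)) m, condExp_smul (2 : ℝ) (fun ω => inner ℝ (f ω) (d ω)) m,
    known, pullOut] with ω hadd₁ hadd₂ hsmul hknown hpull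
  rw [hadd₁, Pi.add_apply, hadd₂, Pi.add_apply, hsmul, Pi.smul_apply, hknown, hpull, smul_eq_mul]

end CondExp

section Nonexpansive

variable {E : Type*} [NormedAddCommGroup E] {P : E → E}

lemma norm_map_sub_le_of_fixed (hP : LipschitzWith 1 P) {x y : E} (hx : P x = x) :
    ‖P y - x‖ ≤ ‖y - x‖ := by
  simpa [hx] using hP.norm_sub_le y x

lemma norm_sub_le_norm_map_add_sub (hP : LipschitzWith 1 P) {x v : E} (hx : P x = x) (z : E) :
    ‖x - z‖ ≤ ‖P (x + v) - z‖ + ‖v‖ :=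
  calc ‖x - z‖ = ‖(P (x + v) - z) - (P (x + v) - x)‖ := by rw [sub_sub_sub_cancel_left]
    _ ≤ ‖P (x + v) - z‖ + ‖P (x + v) - x‖ := norm_sub_le _ _
    _ ≤ ‖P (x + v) - z‖ + ‖v‖ := by
      gcongr
      simpa using norm_map_sub_le_of_fixed hP (y := x + v) hx

lemma memLp_sub_of_memLp_map_add_sub {Ω : Type*} {m0 : MeasurableSpace Ω} {μ : Measure Ω}
    {p : ENNReal} (hP : LipschitzWith 1 P) {x v : Ω → E} {z : E}
    (hx : ∀ᵐ ω ∂μ, P (x ω) = x ω) (hxm : AEStronglyMeasurable x μ) (hv : MemLp v p μ)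
    (h : MemLp (fun ω => P (x ω + v ω) - z) p μ) :
    MemLp (fun ω => x ω - z) p μ := by
  refine (h.norm.add hv.norm).mono' (hxm.sub aestronglyMeasurable_const) ?_
  filter_upwards [hx] with ω hω
  exact norm_sub_le_norm_map_add_sub hP hω z

end Nonexpansive

section ProjectedStep

variable {Ω E : Type*} {m m0 : MeasurableSpace Ω} {μ : Measure Ω}
  [NormedAddCommGroup E] [InnerProductSpace ℝ E] [CompleteSpace E]
  {P : E → E} {lam f : Ω → E} {lbar : E}

lemma condExp_norm_map_add_sub_sq_le (hm : m ≤ m0) [SigmaFinite (μ.trim hm)]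
    (hP : LipschitzWith 1 P) (hlbar : P lbar = lbar)
    (hlam : ∀ᵐ ω ∂μ, P (lam ω) = lam ω) (hlamm : AEStronglyMeasurable[m] lam μ)
    (hfi : Integrable f μ) (hf2 : Integrable (fun ω => ‖f ω‖ ^ 2) μ) :
    ∀ᵐ ω ∂μ, (μ[fun ω' => ‖P (lam ω' + f ω') - lbar‖ ^ 2 | m]) ω ≤
      ‖lam ω - lbar‖ ^ 2 + 2 * inner ℝ ((μ[f | m]) ω) (lam ω - lbar)
        + (μ[fun ω' => ‖f ω'‖ ^ 2 | m]) ω := by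
  by_cases hX : Integrable (fun ω => ‖P (lam ω + f ω) - lbar‖ ^ 2) μ
  · have hf : MemLp f 2 μ := (memLp_two_iff_integrable_sq_norm hfi.1).2 hf2
    have hstep : MemLp (fun ω => P (lam ω + f ω) - lbar) 2 μ :=
      (memLp_two_iff_integrable_sq_norm ((hP.continuous.comp_aestronglyMeasurable
        ((hlamm.mono hm).add hfi.1)).sub aestronglyMeasurable_const)).2 hX
    have hd : MemLp (fun ω => lam ω - lbar) 2 μ :=
      memLp_sub_of_memLp_map_add_sub hP hlam (hlamm.mono hm) hf hstep
    have hcontract (ω : Ω) :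
        ‖P (lam ω + f ω) - lbar‖ ^ 2 ≤ ‖(lam ω - lbar) + f ω‖ ^ 2 := by
      rw [← add_sub_right_comm]
      gcongr
      exact norm_map_sub_le_of_fixed hP hlbar
    exact (condExp_mono hX ((hd.add hf).integrable_norm_pow two_ne_zero)
      (ae_of_all _ hcontract)).trans_eq
        (condExp_norm_add_sq hm (hlamm.sub aestronglyMeasurable_const) hd hf hfi)
  · rw [condExp_of_not_integrable hX]
    filter_upwards [norm_condExp_sq_le (m := m) hf2] with ω hjensen
    calc (0 : ℝ) ≤ ‖(lam ω - lbar) + (μ[f | m]) ω‖ ^ 2 := sq_nonneg _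
      _ = ‖lam ω - lbar‖ ^ 2 + 2 * inner ℝ ((μ[f | m]) ω) (lam ω - lbar)
          + ‖(μ[f | m]) ω‖ ^ 2 := by rw [norm_add_sq_real, real_inner_comm]
      _ ≤ _ := by gcongr

theorem stmt17_general (hm : m ≤ m0) [SigmaFinite (μ.trim hm)]
    (hP : LipschitzWith 1 P) (hlbar : P lbar = lbar)
    (hlam : ∀ᵐ ω ∂μ, P (lam ω) = lam ω) (hlamm : AEStronglyMeasurable[m] lam μ)
    (hfi : Integrable f μ) (hf2 : Integrable (fun ω => ‖f ω‖ ^ 2) μ)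
    {gbar : E → ℝ} {S ε η : ℝ} (hη : 0 ≤ η)
    (hmom : ∀ᵐ ω ∂μ, (μ[fun ω' => ‖f ω'‖ ^ 2 | m]) ω ≤ S ^ 2)
    (hgrad : ∀ᵐ ω ∂μ,
      inner ℝ ((μ[f | m]) ω) (lam ω - lbar) - ε ^ 2 ≤ gbar (lam ω) - gbar lbar) :
    ∀ᵐ ω ∂μ, (μ[fun ω' => ‖P (lam ω' + η • f ω') - lbar‖ ^ 2 | m]) ω ≤
      ‖lam ω - lbar‖ ^ 2 + η ^ 2 * S ^ 2 - 2 * η * (gbar lbar - gbar (lam ω) - ε ^ 2) := by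
  have hηf2 : Integrable (fun ω => ‖η • f ω‖ ^ 2) μ := by
    simpa only [norm_smul, mul_pow] using hf2.const_mul (‖η‖ ^ 2)
  filter_upwards [condExp_norm_map_add_sub_sq_le hm hP hlbar hlam hlamm (hfi.smul η) hηf2,
    condExp_smul η f m, condExp_norm_smul_sq (m := m) η f, hmom, hgrad]
    with ω hstep hsmul hsq hmom hgrad
  simp only [Pi.smul_apply] at hstep hsmul
  rw [hsmul, hsq, real_inner_smul_left] at hstep
  linarith [mul_le_mul_of_nonneg_left hmom (sq_nonneg η), mul_le_mul_of_nonneg_left hgrad hη]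

end ProjectedStep

section Coordinates

variable {ι : Type*} [Fintype ι]

lemma lipschitzWith_toLp_map {E F : ι → Type*} [∀ i, SeminormedAddCommGroup (E i)]
    [∀ i, SeminormedAddCommGroup (F i)] {K : NNReal} {φ : ∀ i, E i → F i}
    (hφ : ∀ i, LipschitzWith K (φ i)) :
    LipschitzWith K fun x : PiLp 2 E => WithLp.toLp 2 fun i => φ i (x i) := by
  refine .of_dist_le_mul fun x y => ?_
  rw [← abs_of_nonneg dist_nonneg, ← abs_of_nonneg (by positivity : 0 ≤ K * dist x y),
    ← sq_le_sq, mul_pow, PiLp.dist_sq_eq_of_L2, PiLp.dist_sq_eq_of_L2, Finset.mul_sum]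
  gcongr with i
  rw [← mul_pow]
  gcongr
  exact (hφ i).dist_le_mul _ _

lemma inner_condExp_toLp {Ω : Type*} {m m0 : MeasurableSpace Ω} {μ : Measure Ω}
    {f : Ω → ι → ℝ} (hf : ∀ i, Integrable (fun ω => f ω i) μ) :
    ∀ᵐ ω ∂μ, ∀ v : EuclideanSpace ℝ ι,
      inner ℝ ((μ[fun ω' => WithLp.toLp 2 (f ω') | m]) ω) v =
        ∑ i, (μ[fun ω' => f ω' i | m]) ω * v i := by
  have hfi : Integrable (fun ω => WithLp.toLp 2 (f ω)) μ := .of_eval_piLp hf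
  filter_upwards [ae_all_iff.2 fun i =>
    (EuclideanSpace.proj (𝕜 := ℝ) i).comp_condExp_comm (m := m) hfi] with ω hω v
  simp only [PiLp.inner_apply, RCLike.inner_apply', conj_trivial]
  exact Finset.sum_congr rfl fun i _ => congrArg (· * v i) (hω i)

end Coordinates

/-- one step of projected stochastic dual ascent: on a probability space
with sub-σ-algebra `𝒢`, if `λ` is `𝒢`-measurable with values in `ℝ₊ᵐ`, `λ̄* ∈ ℝ₊ᵐ`,
`f̂` is square-integrable with `𝔼[‖f̂‖² | 𝒢] ≤ S²` a.s. and the approximate supergradient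
inequality `𝔼[f̂ | 𝒢]ᵀ(λ − λ̄*) − ε² ≤ ḡ(λ) − ḡ(λ̄*)` a.s., then the projected update
`λ⁺ᵢ = max(0, λᵢ + η f̂ᵢ)` satisfies a.s.
`𝔼[‖λ⁺ − λ̄*‖² | 𝒢] ≤ ‖λ − λ̄*‖² + η² S² − 2η (ḡ(λ̄*) − ḡ(λ) − ε²)`. -/
theorem stmt17 {Ω : Type*} {m0 : MeasurableSpace Ω} (μ : Measure Ω)
    [IsProbabilityMeasure μ]
    (mG : MeasurableSpace Ω) (hmG : mG ≤ m0) {m : ℕ}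
    (lbar : Fin m → ℝ) (hlbar : ∀ i, 0 ≤ lbar i)
    (gbar : (Fin m → ℝ) → ℝ)
    (lam : Ω → Fin m → ℝ) (hlamMeas : Measurable[mG] lam)
    (hlamPos : ∀ ω i, 0 ≤ lam ω i)
    (fhat : Ω → Fin m → ℝ)
    (hInt : ∀ i, Integrable (fun ω => fhat ω i) μ)
    (hInt2 : Integrable (fun ω => ∑ i, fhat ω i ^ 2) μ)
    (S ε η : ℝ) (hη : 0 < η)
    (hmom : ∀ᵐ ω ∂μ, (μ[fun ω' => ∑ i, fhat ω' i ^ 2 | mG]) ω ≤ S ^ 2)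
    (hgrad : ∀ᵐ ω ∂μ,
      (∑ i, (μ[fun ω' => fhat ω' i | mG]) ω * (lam ω i - lbar i)) - ε ^ 2
        ≤ gbar (lam ω) - gbar lbar) :
    ∀ᵐ ω ∂μ,
      (μ[fun ω' => ∑ i, (max 0 (lam ω' i + η * fhat ω' i) - lbar i) ^ 2 | mG]) ω
        ≤ ∑ i, (lam ω i - lbar i) ^ 2 + η ^ 2 * S ^ 2
            - 2 * η * (gbar lbar - gbar (lam ω) - ε ^ 2) := by
  have hgrad' : ∀ᵐ ω ∂μ,
      inner ℝ ((μ[fun ω' => WithLp.toLp 2 (fhat ω') | mG]) ω)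
        (WithLp.toLp 2 (lam ω) - WithLp.toLp 2 lbar) - ε ^ 2 ≤ gbar (lam ω) - gbar lbar := by
    filter_upwards [hgrad, inner_condExp_toLp hInt] with ω h hinner
    rwa [hinner]
  simpa [EuclideanSpace.real_norm_sq_eq] using stmt17_general hmG
    (lipschitzWith_toLp_map fun _ => LipschitzWith.id.const_max 0) (by simp [hlbar])
    (by simp [hlamPos]) ((PiLp.continuous_toLp 2 _).comp_stronglyMeasurable
      hlamMeas.stronglyMeasurable).aestronglyMeasurable (.of_eval_piLp hInt)
    (by simpa [EuclideanSpace.real_norm_sq_eq] using hInt2) (gbar := fun x => gbar x.ofLp) hη.le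
    (by simpa [EuclideanSpace.real_norm_sq_eq] using hmom) hgrad'
end

section
/- Let (Ω, 𝔽, ℙ) be a probability space with a filtration (𝔽_h)_{h≥1}. Let ḡ : ℝ₊ᵐ → ℝ attain its supremum D̄* over ℝ₊ᵐ at λ̄* ∈ ℝ₊ᵐ. Let (λ(h))_{h≥1} be an (𝔽_h)-adapted process in ℝ₊ᵐ generated by λᵢ(h+1) = max(0, λᵢ(h) + η f̂ᵢ(h)), where for every h, almost surely 𝔼[‖f̂(h)‖² | 𝔽_h] ≤ S² and 𝔼[f̂(h) | 𝔽_h]ᵀ(λ(h) − λ̄*) − ε² ≤ ḡ(λ(h)) − ḡ(λ̄*). Then almost surely sup_{h≥1} ḡ(λ(h)) ≥ D̄* − (η S²/2 + ε²); equivalently, the running maximum ḡ_best(h) = max_{h′ ≤ h} ḡ(λ(h′)) satisfies lim_{h→∞} ḡ_best(h) ≥ D̄* − (η S²/2 + ε²) almost surely. -/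
/-!
Fix `δ > 0`. As long as `ḡ (x h) < ḡ z - (η S² / 2 + ε²) - δ`, the supergradient inequality
bounds `⟪x h - z, 𝔼[f h | ℱ h]⟫` by `-(η S² / 2) - δ`, so expanding `‖x h + η f h - z‖²` shows
that one step lowers the conditional expectation of `‖x h - z‖²` by at least `2 η δ`. A nonnegative
process cannot decrease at a fixed rate forever, so almost surely the threshold is reached
infinitely often. Since `‖x h - z‖²` need not be integrable, the descent is tracked on the events
where the squared distance is bounded when the descent starts.
-/

open MeasureTheory

section Drift

open Filter Set

variable {Ω : Type*} {m0 : MeasurableSpace Ω} {μ : Measure Ω} [IsFiniteMeasure μ]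

theorem measure_iInter_eq_zero_of_setIntegral_add_le {V : ℕ → Ω → ℝ} {A : ℕ → Set Ω} {δ : ℝ}
    (hV : ∀ n ω, 0 ≤ V n ω) (hA : Antitone A) (hδ : 0 < δ) (hint : IntegrableOn (V 0) (A 0) μ)
    (hstep : ∀ n, IntegrableOn (V n) (A n) μ → IntegrableOn (V (n + 1)) (A n) μ ∧
      ∫ ω in A n, V (n + 1) ω ∂μ + δ * μ.real (A n) ≤ ∫ ω in A n, V n ω ∂μ) :
    μ (⋂ n, A n) = 0 := by
  set B := ⋂ n, A n
  have htelescope : ∀ n : ℕ, IntegrableOn (V n) (A n) μ ∧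
      ∫ ω in A n, V n ω ∂μ + n * (δ * μ.real B) ≤ ∫ ω in A 0, V 0 ω ∂μ := by
    intro n
    induction n with
    | zero => exact ⟨hint, by simp⟩
    | succ n ih =>
      obtain ⟨hVint, hVle⟩ := hstep n ih.1
      have hshrink : ∫ ω in A (n + 1), V (n + 1) ω ∂μ ≤ ∫ ω in A n, V (n + 1) ω ∂μ :=
        setIntegral_mono_set hVint (ae_of_all _ (hV _)) (hA n.le_succ).eventuallyLE
      have hBA : δ * μ.real B ≤ δ * μ.real (A n) :=
        mul_le_mul_of_nonneg_left (measureReal_mono (iInter_subset A n)) hδ.le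
      refine ⟨hVint.mono_set (hA n.le_succ), ?_⟩
      push_cast
      linarith [ih.2]
  by_contra hB
  have hdrop : 0 < δ * μ.real B := mul_pos hδ (ENNReal.toReal_pos hB (measure_ne_top μ B))
  obtain ⟨n, hn⟩ := exists_nat_gt ((∫ ω in A 0, V 0 ω ∂μ) / (δ * μ.real B))
  rw [div_lt_iff₀ hdrop] at hn
  have hnonneg : 0 ≤ ∫ ω in A n, V n ω ∂μ := integral_nonneg (hV n)
  linarith [(htelescope n).2]

/-- The drift condition `μ[V (n + 1) | ℱ n] ≤ V n - D n` of Foster–Lyapunov arguments. It is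
tested only on `ℱ n`-measurable sets on which `V n` is integrable and `D n` is bounded below by a
constant, so that neither `V n` nor `D n` has to be integrable on the whole space. -/
def HasLocalDrift (μ : Measure Ω) (ℱ : Filtration ℕ m0) (V D : ℕ → Ω → ℝ) : Prop :=
  ∀ n (A : Set Ω) (δ : ℝ), MeasurableSet[ℱ n] A → IntegrableOn (V n) A μ → (∀ ω ∈ A, δ ≤ D n ω) →
    IntegrableOn (V (n + 1)) A μ ∧
      ∫ ω in A, V (n + 1) ω ∂μ + δ * μ.real A ≤ ∫ ω in A, V n ω ∂μ

variable {ℱ : Filtration ℕ m0} {V D : ℕ → Ω → ℝ}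

theorem HasLocalDrift.ae_exists_ge_lt_of_le (h : HasLocalDrift μ ℱ V D)
    (hVm : StronglyAdapted ℱ V) (hDm : StronglyAdapted ℱ D) (hV : ∀ n ω, 0 ≤ V n ω) {δ : ℝ}
    (hδ : 0 < δ) (k : ℕ) (c : ℝ) : ∀ᵐ ω ∂μ, V k ω ≤ c → ∃ n ≥ k, D n ω < δ := by
  let A : ℕ → Set Ω := fun n => V k ⁻¹' Iic c ∩ ⋂ i ≤ n, D (k + i) ⁻¹' Ici δ
  have hAm : ∀ n, MeasurableSet[ℱ (k + n)] (A n) := fun n =>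
    (ℱ.mono (Nat.le_add_right k n) _ ((hVm k).measurable measurableSet_Iic)).inter <|
      MeasurableSet.iInter fun i => MeasurableSet.iInter fun hi =>
        ℱ.mono (Nat.add_le_add_left hi k) _ ((hDm (k + i)).measurable measurableSet_Ici)
  have hA : Antitone A := fun _ _ hle =>
    inter_subset_inter_right _ (biInter_mono (fun _ hi => le_trans hi hle) fun _ _ => subset_rfl)
  have hint : IntegrableOn (V k) (A 0) μ :=
    Measure.integrableOn_of_bounded (M := c) (measure_ne_top μ _)
      ((hVm k).mono (ℱ.le k)).aestronglyMeasurable <|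
      ae_restrict_of_forall_mem (ℱ.le _ _ (hAm 0)) fun ω hω =>
        (Real.norm_of_nonneg (hV k ω)).trans_le hω.1
  have hnull : μ (⋂ n, A n) = 0 :=
    measure_iInter_eq_zero_of_setIntegral_add_le (V := fun n => V (k + n)) (fun n => hV (k + n))
      hA hδ hint fun n hn =>
        h (k + n) (A n) δ (hAm n) hn fun _ hω => mem_iInter₂.1 hω.2 n le_rfl
  filter_upwards [measure_eq_zero_iff_ae_notMem.1 hnull] with ω hω hVc
  by_contra! hge
  exact hω <| mem_iInter.2 fun n =>
    ⟨hVc, mem_iInter₂.2 fun i _ => hge (k + i) (Nat.le_add_right k i)⟩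

theorem HasLocalDrift.ae_forall_pos_frequently_lt (h : HasLocalDrift μ ℱ V D)
    (hVm : StronglyAdapted ℱ V) (hDm : StronglyAdapted ℱ D) (hV : ∀ n ω, 0 ≤ V n ω) :
    ∀ᵐ ω ∂μ, ∀ δ > 0, ∃ᶠ n in atTop, D n ω < δ := by
  have hcountable : ∀ᵐ ω ∂μ, ∀ j k N : ℕ,
      V k ω ≤ N → ∃ n ≥ k, D n ω < 1 / ((j : ℝ) + 1) := by
    simp only [ae_all_iff]
    exact fun j k N => h.ae_exists_ge_lt_of_le hVm hDm hV Nat.one_div_pos_of_nat k N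
  filter_upwards [hcountable] with ω hω δ hδ
  obtain ⟨j, hj⟩ := exists_nat_one_div_lt hδ
  refine frequently_atTop.2 fun k => ?_
  obtain ⟨N, hN⟩ := exists_nat_ge (V k ω)
  obtain ⟨n, hkn, hn⟩ := hω j k N hN
  exact ⟨n, hkn, hn.trans hj⟩

end Drift

section InnerProductSpace

open Filter
open scoped InnerProductSpace

variable {Ω E : Type*} {m0 : MeasurableSpace Ω} {μ : Measure Ω}
  [NormedAddCommGroup E] [InnerProductSpace ℝ E]

theorem integrable_inner_of_memLp_two {X f : Ω → E} (hX : MemLp X 2 μ) (hf : MemLp f 2 μ) :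
    Integrable (fun ω => ⟪X ω, f ω⟫_ℝ) μ :=
  memLp_one_iff_integrable.1 ((innerSL ℝ).memLp_of_bilin 1 hX hf)

variable [CompleteSpace E] [IsFiniteMeasure μ]

theorem integral_inner_condExp {m : MeasurableSpace Ω} (hm : m ≤ m0) {X f : Ω → E}
    (hXm : StronglyMeasurable[m] X) (hX : MemLp X 2 μ) (hf : MemLp f 2 μ) :
    ∫ ω, ⟪X ω, (μ[f | m]) ω⟫_ℝ ∂μ = ∫ ω, ⟪X ω, f ω⟫_ℝ ∂μ := by
  have hpull : μ[fun ω => ⟪X ω, f ω⟫_ℝ | m] =ᵐ[μ] fun ω => ⟪X ω, (μ[f | m]) ω⟫_ℝ :=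
    condExp_bilin_of_stronglyMeasurable_left (innerSL ℝ) hXm
      (integrable_inner_of_memLp_two hX hf) (hf.integrable one_le_two)
  rw [← integral_congr_ae hpull, integral_condExp hm]

theorem integral_norm_add_smul_sq_eq_condExp {m : MeasurableSpace Ω} (hm : m ≤ m0) {X f : Ω → E}
    (hXm : StronglyMeasurable[m] X) (hX : MemLp X 2 μ) (hf : MemLp f 2 μ) (η : ℝ) :
    ∫ ω, ‖X ω + η • f ω‖ ^ 2 ∂μ = ∫ ω, (‖X ω‖ ^ 2 + 2 * η * ⟪X ω, (μ[f | m]) ω⟫_ℝ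
      + η ^ 2 * (μ[fun ω' => ‖f ω'‖ ^ 2 | m]) ω) ∂μ := by
  have hX2 : Integrable (fun ω => ‖X ω‖ ^ 2) μ := hX.integrable_norm_pow two_ne_zero
  have hf2 : Integrable (fun ω => ‖f ω‖ ^ 2) μ := hf.integrable_norm_pow two_ne_zero
  have hXf := (integrable_inner_of_memLp_two hX hf).const_mul (2 * η)
  have hXc := (integrable_inner_of_memLp_two hX (hf.condExp (m := m) one_le_two)).const_mul (2 * η)
  have hexpand : ∀ ω, ‖X ω + η • f ω‖ ^ 2
      = ‖X ω‖ ^ 2 + 2 * η * ⟪X ω, f ω⟫_ℝ + η ^ 2 * ‖f ω‖ ^ 2 := fun ω => by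
    rw [norm_add_sq_real, inner_smul_right, norm_smul, mul_pow, Real.norm_eq_abs, sq_abs, mul_assoc]
  simp_rw [hexpand]
  rw [integral_add (hX2.fun_add hXf) (hf2.const_mul _), integral_add hX2 hXf,
    integral_add (hX2.fun_add hXc) (integrable_condExp.const_mul _), integral_add hX2 hXc]
  simp_rw [integral_const_mul]
  rw [integral_inner_condExp hm hXm hX hf, integral_condExp hm]

theorem setIntegral_norm_add_smul_sq_add_le {m : MeasurableSpace Ω} (hm : m ≤ m0)
    {X f : Ω → E} {A : Set Ω} {η C δ : ℝ} (hXm : StronglyMeasurable[m] X)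
    (hA : MeasurableSet[m] A) (hX : MemLp X 2 (μ.restrict A)) (hf : MemLp f 2 μ)
    (hmom : ∀ᵐ ω ∂μ, (μ[fun ω' => ‖f ω'‖ ^ 2 | m]) ω ≤ C)
    (hδ : ∀ ω ∈ A, δ ≤ -(2 * η * ⟪X ω, (μ[f | m]) ω⟫_ℝ + η ^ 2 * C)) :
    ∫ ω in A, ‖X ω + η • f ω‖ ^ 2 ∂μ + δ * μ.real A ≤ ∫ ω in A, ‖X ω‖ ^ 2 ∂μ := by
  have hfA : MemLp f 2 (μ.restrict A) := hf.restrict A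
  have hX2 : IntegrableOn (fun ω => ‖X ω‖ ^ 2) A μ := hX.integrable_norm_pow two_ne_zero
  have hdrop : ∀ᵐ ω ∂μ.restrict A, ‖X ω‖ ^ 2 + 2 * η * ⟪X ω, ((μ.restrict A)[f | m]) ω⟫_ℝ
      + η ^ 2 * ((μ.restrict A)[fun ω' => ‖f ω'‖ ^ 2 | m]) ω ≤ ‖X ω‖ ^ 2 - δ := by
    filter_upwards [ae_restrict_of_ae hmom, ae_restrict_mem (hm _ hA),
      condExp_restrict_ae_eq_restrict hm hA (hf.integrable one_le_two),
      condExp_restrict_ae_eq_restrict hm hA (hf.integrable_norm_pow two_ne_zero)]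
      with ω hmomω hωA hcond hcond2
    rw [hcond, hcond2]
    linarith [hδ ω hωA, mul_le_mul_of_nonneg_left hmomω (sq_nonneg η)]
  calc ∫ ω in A, ‖X ω + η • f ω‖ ^ 2 ∂μ + δ * μ.real A
      ≤ ∫ ω in A, (‖X ω‖ ^ 2 - δ) ∂μ + δ * μ.real A := by
        rw [integral_norm_add_smul_sq_eq_condExp hm hXm hX hfA]
        gcongr ?_ + _
        refine integral_mono_ae ?_ (hX2.sub (integrable_const δ)) hdrop
        exact (hX2.add ((integrable_inner_of_memLp_two hX
          (hfA.condExp one_le_two)).const_mul _)).add (integrable_condExp.const_mul _)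
    _ = ∫ ω in A, ‖X ω‖ ^ 2 ∂μ := by
        rw [integral_sub hX2 (integrable_const δ), setIntegral_const, smul_eq_mul]
        ring

variable {ℱ : Filtration ℕ m0} {x f : ℕ → Ω → E} {z : E} {η S : ℝ}

theorem hasLocalDrift_norm_sub_sq (hx : StronglyAdapted ℱ x)
    (hupdate : ∀ h, ∀ᵐ ω ∂μ, ‖x (h + 1) ω - z‖ ≤ ‖x h ω + η • f h ω - z‖)
    (hf : ∀ h, MemLp (f h) 2 μ)
    (hmom : ∀ h, ∀ᵐ ω ∂μ, (μ[fun ω' => ‖f h ω'‖ ^ 2 | ℱ h]) ω ≤ S ^ 2) :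
    HasLocalDrift μ ℱ (fun h ω => ‖x h ω - z‖ ^ 2)
      (fun h ω => -(2 * η * ⟪x h ω - z, (μ[f h | ℱ h]) ω⟫_ℝ + η ^ 2 * S ^ 2)) := by
  intro h A δ hA hint hδ
  have hXm : ∀ n, StronglyMeasurable[ℱ n] fun ω => x n ω - z :=
    fun n => (hx n).sub stronglyMeasurable_const
  have hXae : ∀ n, AEStronglyMeasurable (fun ω => x n ω - z) (μ.restrict A) :=
    fun n => ((hXm n).mono (ℱ.le n)).aestronglyMeasurable
  have hX : MemLp (fun ω => x h ω - z) 2 (μ.restrict A) :=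
    (memLp_two_iff_integrable_sq_norm (hXae h)).2 hint
  have hY : MemLp (fun ω => (x h ω - z) + η • f h ω) 2 (μ.restrict A) :=
    hX.add (((hf h).restrict A).const_smul η)
  have hcontract : ∀ᵐ ω ∂μ.restrict A, ‖x (h + 1) ω - z‖ ≤ ‖(x h ω - z) + η • f h ω‖ := by
    filter_upwards [ae_restrict_of_ae (hupdate h)] with ω hω
    rwa [sub_add_eq_add_sub]
  have hnext : IntegrableOn (fun ω => ‖x (h + 1) ω - z‖ ^ 2) A μ :=
    (hY.of_le (hXae (h + 1)) hcontract).integrable_norm_pow two_ne_zero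
  have hle : ∫ ω in A, ‖x (h + 1) ω - z‖ ^ 2 ∂μ ≤ ∫ ω in A, ‖(x h ω - z) + η • f h ω‖ ^ 2 ∂μ := by
    refine integral_mono_ae hnext (hY.integrable_norm_pow two_ne_zero) ?_
    filter_upwards [hcontract] with ω hω
    gcongr
  have hstep := setIntegral_norm_add_smul_sq_add_le (ℱ.le h) (hXm h) hA hX (hf h) (hmom h) hδ
  exact ⟨hnext, by linarith⟩

theorem ae_forall_pos_frequently_lt_inner_condExp (hη : 0 < η)
    (hx : StronglyAdapted ℱ x)
    (hupdate : ∀ h, ∀ᵐ ω ∂μ, ‖x (h + 1) ω - z‖ ≤ ‖x h ω + η • f h ω - z‖)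
    (hf : ∀ h, MemLp (f h) 2 μ)
    (hmom : ∀ h, ∀ᵐ ω ∂μ, (μ[fun ω' => ‖f h ω'‖ ^ 2 | ℱ h]) ω ≤ S ^ 2) :
    ∀ᵐ ω ∂μ, ∀ δ > 0, ∃ᶠ h in atTop,
      -(η * S ^ 2 / 2) - δ < ⟪x h ω - z, (μ[f h | ℱ h]) ω⟫_ℝ := by
  have hXm : ∀ h, StronglyMeasurable[ℱ h] fun ω => x h ω - z :=
    fun h => (hx h).sub stronglyMeasurable_const
  have hdrift := (hasLocalDrift_norm_sub_sq hx hupdate hf hmom).ae_forall_pos_frequently_lt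
    (fun h => (hXm h).norm.pow 2)
    (fun h => ((((hXm h).inner stronglyMeasurable_condExp).const_mul _).add
      stronglyMeasurable_const).neg) fun _ _ => sq_nonneg _
  filter_upwards [hdrift] with ω hω δ hδ
  refine (hω (2 * η * δ) (by positivity)).mono fun h hlt => ?_
  refine lt_of_mul_lt_mul_left ?_ (by positivity : 0 ≤ 2 * η)
  linarith

theorem stmt18_general (gbar : E → ℝ) (ε : ℝ) (hη : 0 < η)
    (hx : StronglyAdapted ℱ x)
    (hupdate : ∀ h, ∀ᵐ ω ∂μ, ‖x (h + 1) ω - z‖ ≤ ‖x h ω + η • f h ω - z‖)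
    (hf : ∀ h, MemLp (f h) 2 μ)
    (hmom : ∀ h, ∀ᵐ ω ∂μ, (μ[fun ω' => ‖f h ω'‖ ^ 2 | ℱ h]) ω ≤ S ^ 2)
    (hgrad : ∀ h, ∀ᵐ ω ∂μ,
      ⟪x h ω - z, (μ[f h | ℱ h]) ω⟫_ℝ - ε ^ 2 ≤ gbar (x h ω) - gbar z) :
    ∀ᵐ ω ∂μ, ((gbar z - (η * S ^ 2 / 2 + ε ^ 2) : ℝ) : EReal)
      ≤ limsup (fun h => (gbar (x h ω) : EReal)) atTop := by
  filter_upwards [ae_forall_pos_frequently_lt_inner_condExp hη hx hupdate hf hmom,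
    ae_all_iff.2 hgrad] with ω hfreq hgradω
  refine EReal.ge_of_forall_gt_iff_ge.1 fun q hq => ?_
  have hgap := sub_pos.2 (EReal.coe_lt_coe_iff.1 hq)
  refine le_limsup_of_frequently_le ((hfreq _ hgap).mono fun h hlt => ?_)
  exact EReal.coe_le_coe_iff.2 (by linarith [hgradω h])

end InnerProductSpace

section EuclideanSpace

open scoped InnerProductSpace

variable {ι : Type*} [Fintype ι]

theorem norm_sub_le_of_eq_max_zero {x y z : EuclideanSpace ℝ ι} (hz : ∀ i, 0 ≤ z i)
    (hy : ∀ i, y i = max 0 (x i)) : ‖y - z‖ ≤ ‖x - z‖ := by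
  have hcoord : ∀ i, |max 0 (x i) - z i| ≤ |x i - z i| := fun i => by
    simpa only [max_comm 0 (x i), max_eq_left (hz i)] using abs_max_sub_max_le_abs (x i) (z i) 0
  simp only [EuclideanSpace.norm_eq]
  gcongr with i
  simpa only [PiLp.sub_apply, hy, Real.norm_eq_abs] using hcoord i

theorem memLp_two_of_integrable_sum_sq {Ω : Type*} {m0 : MeasurableSpace Ω} {μ : Measure Ω}
    {f : Ω → EuclideanSpace ℝ ι} (hf : AEStronglyMeasurable f μ)
    (hf2 : Integrable (fun ω => ∑ i, f ω i ^ 2) μ) : MemLp f 2 μ := by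
  simp_rw [memLp_two_iff_integrable_sq_norm hf, EuclideanSpace.real_norm_sq_eq]
  exact hf2

theorem ae_inner_condExp_eq_sum {Ω : Type*} {m m0 : MeasurableSpace Ω} {μ : Measure Ω}
    {f : Ω → EuclideanSpace ℝ ι} (hf : Integrable f μ) :
    ∀ᵐ ω ∂μ, ∀ z, ⟪z, (μ[f | m]) ω⟫_ℝ = ∑ i, (μ[fun ω' => f ω' i | m]) ω * z i := by
  have hcoord : ∀ i, ∀ᵐ ω ∂μ, (μ[f | m]) ω i = (μ[fun ω' => f ω' i | m]) ω :=
    fun i => (EuclideanSpace.proj (𝕜 := ℝ) i).comp_condExp_comm hf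
  filter_upwards [ae_all_iff.2 hcoord] with ω hω z
  rw [PiLp.inner_apply]
  exact Finset.sum_congr rfl fun i _ => by rw [← hω i]; rfl

end EuclideanSpace

/-- convergence of the running maximum of the dual values: let `ḡ` attain
its supremum `D̄*` over `ℝ₊ᵐ` at `λ̄*`, and let `(λ(h))` be an adapted process in `ℝ₊ᵐ`
generated by the projected stochastic ascent update `λᵢ(h+1) = max(0, λᵢ(h) + η f̂ᵢ(h))`
with conditionally bounded second moments `𝔼[‖f̂(h)‖² | 𝔽_h] ≤ S²` and the approximate
supergradient inequality `𝔼[f̂(h) | 𝔽_h]ᵀ(λ(h) − λ̄*) − ε² ≤ ḡ(λ(h)) − ḡ(λ̄*)` a.s.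
Then almost surely `sup_{h ≥ 1} ḡ(λ(h)) ≥ D̄* − (η S²/2 + ε²)`. -/
theorem stmt18 {Ω : Type*} {m0 : MeasurableSpace Ω} (μ : Measure Ω)
    [IsProbabilityMeasure μ] (ℱ : Filtration ℕ m0) {m : ℕ}
    (gbar : (Fin m → ℝ) → ℝ) (Dstar : ℝ)
    (lbar : Fin m → ℝ) (hlbar : ∀ i, 0 ≤ lbar i)
    (hmax : ∀ l : Fin m → ℝ, (∀ i, 0 ≤ l i) → gbar l ≤ gbar lbar)
    (hD : Dstar = gbar lbar)
    (η S ε : ℝ) (hη : 0 < η)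
    (lam : ℕ → Ω → Fin m → ℝ) (fhat : ℕ → Ω → Fin m → ℝ)
    (hadapted : ∀ h, Measurable[ℱ h] (lam h))
    (hpos : ∀ h ω i, 0 ≤ lam h ω i)
    (hupdate : ∀ h ω i, lam (h + 1) ω i = max 0 (lam h ω i + η * fhat h ω i))
    (hInt : ∀ h i, Integrable (fun ω => fhat h ω i) μ)
    (hInt2 : ∀ h, Integrable (fun ω => ∑ i, fhat h ω i ^ 2) μ)
    (hmom : ∀ h, ∀ᵐ ω ∂μ, (μ[fun ω' => ∑ i, fhat h ω' i ^ 2 | ℱ h]) ω ≤ S ^ 2)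
    (hgrad : ∀ h, ∀ᵐ ω ∂μ,
      (∑ i, (μ[fun ω' => fhat h ω' i | ℱ h]) ω * (lam h ω i - lbar i)) - ε ^ 2
        ≤ gbar (lam h ω) - gbar lbar) :
    ∀ᵐ ω ∂μ,
      ((Dstar - (η * S ^ 2 / 2 + ε ^ 2) : ℝ) : EReal)
        ≤ ⨆ h : ℕ, ((gbar (lam (h + 1) ω) : ℝ) : EReal) := by
  subst hD
  let f : ℕ → Ω → EuclideanSpace ℝ (Fin m) := fun h ω => WithLp.toLp 2 (fhat h ω)
  have hf : ∀ h, Integrable (f h) μ := fun h => .of_eval_piLp (hInt h)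
  have hlimsup := stmt18_general (f := f) (z := WithLp.toLp 2 lbar) (fun y => gbar y.ofLp) ε hη
    (fun h => ((WithLp.measurable_toLp 2 _).comp (hadapted h)).stronglyMeasurable)
    (fun h => ae_of_all _ fun ω => norm_sub_le_of_eq_max_zero hlbar (hupdate h ω))
    (fun h => memLp_two_of_integrable_sum_sq (hf h).aestronglyMeasurable (hInt2 h))
    (fun h => by simpa only [EuclideanSpace.real_norm_sq_eq] using hmom h)
    fun h => by
      filter_upwards [hgrad h, ae_inner_condExp_eq_sum (m := ℱ h) (hf h)] with ω hω hinner
      exact (hinner _).symm ▸ hω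
  filter_upwards [hlimsup] with ω hω
  rw [← Filter.limsup_nat_add _ 1] at hω
  exact hω.trans Filter.limsup_le_iSup
end

section
/- Let g, ḡ : ℝ₊ᵐ → ℝ with g(λ) ≤ ḡ(λ) ≤ g(λ) + 4R(1 + ‖λ‖₁)ν for all λ ∈ ℝ₊ᵐ, where R, ν ≥ 0. Let λ* ∈ ℝ₊ᵐ maximize g over ℝ₊ᵐ, with the first-order optimality condition ∇g(λ*)ᵀ(λ − λ*) ≤ 0 for all λ ∈ ℝ₊ᵐ. Let λ_b ∈ ℝ₊ᵐ satisfy ḡ(λ_b) ≥ sup_{λ ∈ ℝ₊ᵐ} ḡ(λ) − e for some e ≥ 0, and suppose g is differentiable and μ-strongly concave (μ > 0) on the segment joining λ* and λ_b. Then ‖λ_b − λ*‖² ≤ (2/μ)(e + 4R(1 + ‖λ_b‖₁)ν). -/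
/-!
Since `g ≤ ḡ`, a near-maximizer `b` of `ḡ` is a near-maximizer of `g`, the tolerance growing only by
the gap `ḡ - g` at `b`. At `a = λ*` the linear term of the strong concavity inequality is
nonpositive in every feasible direction, so `g` falls by at least `(μ / 2) ‖b - a‖²` from `a` to
`b`; this fall cannot exceed the tolerance.
-/

section ApproxMax

variable {α β : Type*}

/-- `b` maximizes `f` over `s` up to an additive error `e`. As for `IsMaxOn`, membership of `b` in
`s` is not required. The error is added to `f b`, so that neither subtraction nor a supremum of `f`
is needed. -/
def IsApproxMaxOn [Add β] [LE β] (f : α → β) (e : β) (s : Set α) (b : α) : Prop :=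
  ∀ x ∈ s, f x ≤ f b + e

theorem IsApproxMaxOn.of_le_of_le_add [AddCommMonoid β] [Preorder β] [IsOrderedAddMonoid β]
    {f g : α → β} {d e : β} {s : Set α} {b : α} (hf : IsApproxMaxOn f e s b)
    (hle : ∀ x ∈ s, g x ≤ f x) (hb : f b ≤ g b + d) : IsApproxMaxOn g (e + d) s b := by
  intro x hx
  calc
    g x ≤ f x := hle x hx
    _ ≤ f b + e := hf x hx
    _ ≤ g b + d + e := by gcongr
    _ = g b + (e + d) := by rw [add_assoc, add_comm d e]

end ApproxMax

section StrongSupergradient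

variable {E : Type*} [SeminormedAddCommGroup E] [NormedSpace ℝ E]

/-- The functional `p` is a `μ`-strong supergradient of `g` at `a` relative to `s`: on `s` the
function `g` lies below the concave paraboloid through `(a, g a)` with slope `p` and curvature `μ`.
For a differentiable `g` that is `μ`-strongly concave on `s ∋ a` in the first-order sense, the
derivative at `a` is such a `p`. -/
def IsStrongSupergradientWithinAt (μ : ℝ) (g : E → ℝ) (p : StrongDual ℝ E) (s : Set E) (a : E) :
    Prop :=
  ∀ y ∈ s, g y ≤ g a + p (y - a) - μ / 2 * ‖y - a‖ ^ 2

namespace IsStrongSupergradientWithinAt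

variable {μ : ℝ} {g : E → ℝ} {p : StrongDual ℝ E} {s : Set E} {a b : E}

theorem le_sub_mul_norm_sq (h : IsStrongSupergradientWithinAt μ g p s a) (hb : b ∈ s)
    (hp : p (b - a) ≤ 0) : g b ≤ g a - μ / 2 * ‖b - a‖ ^ 2 := by
  linarith [h b hb]

theorem norm_sub_sq_le (h : IsStrongSupergradientWithinAt μ g p s a) (hμ : 0 < μ) (hb : b ∈ s)
    (hp : p (b - a) ≤ 0) {ε : ℝ} (hε : g a ≤ g b + ε) : ‖b - a‖ ^ 2 ≤ 2 / μ * ε := by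
  have hfall : μ / 2 * ‖b - a‖ ^ 2 ≤ ε := by linarith [h.le_sub_mul_norm_sq hb hp]
  calc
    ‖b - a‖ ^ 2 = 2 / μ * (μ / 2 * ‖b - a‖ ^ 2) := by field_simp
    _ ≤ 2 / μ * ε := by gcongr

end IsStrongSupergradientWithinAt

theorem innerSL_toLp_sub_toLp {ι : Type*} [Fintype ι] (v x y : ι → ℝ) :
    innerSL ℝ (WithLp.toLp 2 v) (WithLp.toLp 2 x - WithLp.toLp 2 y) =
      ∑ i, v i * (x i - y i) := by
  simp only [innerSL_apply_apply, PiLp.inner_apply, PiLp.sub_apply, RCLike.inner_apply',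
    conj_trivial]

theorem norm_toLp_sub_toLp_sq {ι : Type*} [Fintype ι] (x y : ι → ℝ) :
    ‖WithLp.toLp 2 x - WithLp.toLp 2 y‖ ^ 2 = ∑ i, (x i - y i) ^ 2 := by
  simp only [EuclideanSpace.real_norm_sq_eq, PiLp.sub_apply]

theorem isStrongSupergradientWithinAt_toLp_iff {ι : Type*} [Fintype ι] {μ : ℝ}
    {g : (ι → ℝ) → ℝ} {v a : ι → ℝ} {s : Set (ι → ℝ)} :
    IsStrongSupergradientWithinAt μ (fun x : EuclideanSpace ℝ ι => g x.ofLp)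
        (innerSL ℝ (WithLp.toLp 2 v)) (WithLp.ofLp ⁻¹' s) (WithLp.toLp 2 a) ↔
      ∀ y ∈ s, g y ≤ g a + ∑ i, v i * (y i - a i) - μ / 2 * ∑ i, (y i - a i) ^ 2 := by
  simp only [IsStrongSupergradientWithinAt, (WithLp.equiv 2 (ι → ℝ)).forall_congr_left,
    Set.mem_preimage, WithLp.equiv_symm_apply, innerSL_toLp_sub_toLp, norm_toLp_sub_toLp_sq]

theorem stmt19_general {g gbar : E → ℝ} {p : StrongDual ℝ E} {K s : Set E} {a b : E} {μ d e : ℝ}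
    (hμ : 0 < μ) (hle : ∀ x ∈ K, g x ≤ gbar x) (hgap : gbar b ≤ g b + d)
    (ha : a ∈ K) (hbK : b ∈ K) (hbs : b ∈ s) (hsubopt : IsApproxMaxOn gbar e K b)
    (hconc : IsStrongSupergradientWithinAt μ g p s a) (hfoc : ∀ x ∈ K, p (x - a) ≤ 0) :
    ‖b - a‖ ^ 2 ≤ 2 / μ * (e + d) :=
  hconc.norm_sub_sq_le hμ hbs (hfoc b hbK) (hsubopt.of_le_of_le_add hle hgap a ha)

end StrongSupergradient

/-- let `g ≤ ḡ ≤ g + 4R(1 + ‖·‖₁)ν` on `ℝ₊ᵐ`, let `λ*` maximize `g` over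
`ℝ₊ᵐ` with first-order optimality `∇g(λ*)ᵀ(λ − λ*) ≤ 0` for all `λ ≥ 0`, and let
`λ_b ∈ ℝ₊ᵐ` be `e`-suboptimal for `ḡ` (i.e. `ḡ(λ_b) ≥ sup_{λ ≥ 0} ḡ(λ) − e`).  If `g`
is differentiable (with gradient `Dg`) and `μ`-strongly concave on the segment joining
`λ*` and `λ_b`, then `‖λ_b − λ*‖² ≤ (2/μ)(e + 4R(1 + ‖λ_b‖₁)ν)`. -/
theorem stmt19 {m : ℕ} (g gbar : (Fin m → ℝ) → ℝ) (R ν μ e : ℝ)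
    (hR : 0 ≤ R) (hν : 0 ≤ ν) (hμ : 0 < μ) (he : 0 ≤ e)
    (hgap : ∀ l : Fin m → ℝ, (∀ i, 0 ≤ l i) →
      g l ≤ gbar l ∧ gbar l ≤ g l + 4 * R * (1 + ∑ i, |l i|) * ν)
    (lstar lb : Fin m → ℝ) (hlstar : ∀ i, 0 ≤ lstar i) (hlb : ∀ i, 0 ≤ lb i)
    (hmaxg : ∀ l : Fin m → ℝ, (∀ i, 0 ≤ l i) → g l ≤ g lstar)
    (hsubopt : ∀ l : Fin m → ℝ, (∀ i, 0 ≤ l i) → gbar l - e ≤ gbar lb)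
    (Dg : (Fin m → ℝ) → (Fin m → ℝ))
    (hdiff : ∀ l ∈ segment ℝ lstar lb,
      HasFDerivAt g (∑ i, Dg l i • (ContinuousLinearMap.proj i : (Fin m → ℝ) →L[ℝ] ℝ)) l)
    (hconc : ∀ l1 ∈ segment ℝ lstar lb, ∀ l2 ∈ segment ℝ lstar lb,
      g l2 ≤ g l1 + ∑ i, Dg l1 i * (l2 i - l1 i) - μ / 2 * ∑ i, (l2 i - l1 i) ^ 2)
    (hfoc : ∀ l : Fin m → ℝ, (∀ i, 0 ≤ l i) → ∑ i, Dg lstar i * (l i - lstar i) ≤ 0) :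
    ∑ i, (lb i - lstar i) ^ 2 ≤ (2 / μ) * (e + 4 * R * (1 + ∑ i, |lb i|) * ν) := by
  have hsupergrad := isStrongSupergradientWithinAt_toLp_iff.2
    (hconc lstar (left_mem_segment ℝ lstar lb))
  rw [← norm_toLp_sub_toLp_sq]
  exact stmt19_general (K := {x : EuclideanSpace ℝ (Fin m) | ∀ i, 0 ≤ x i}) hμ
    (fun x hx => (hgap x.ofLp hx).1) (hgap lb hlb).2 hlstar hlb (right_mem_segment ℝ lstar lb)
    (fun x hx => sub_le_iff_le_add.1 (hsubopt x.ofLp hx)) hsupergrad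
    (fun x hx => (innerSL_toLp_sub_toLp _ x.ofLp _).trans_le (hfoc x.ofLp hx))
end
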